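/- arXiv:1710.06193 — 5 statements merged into one kernel-verified Lean document; each statement's English description precedes it below -/
import Mathlib

section
/- Let φ be a smooth diffeomorphism of ℝ² preserving ω₀ and equal to the identity outside a compact set, and let λ be a smooth 1-form on ℝ² with dλ = ω₀. Then the 1-form φ*λ − λ is closed, and there exists a unique compactly supported smooth function σ : ℝ² → ℝ such that dσ = φ*λ − λ. -/
open MeasureTheory

noncomputable section

/-- The standard area form `ω₀ = dx ∧ dy` on `ℝ²`, as a bilinear pairing. -/
def omega0 (u v : ℝ × ℝ) : ℝ := u.1 * v.2 - u.2 * v.1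

/-- A 1-form on `ℝ²`, encoded as a map into the continuous linear functionals. -/
abbrev OneForm := (ℝ × ℝ) → ((ℝ × ℝ) →L[ℝ] ℝ)

/-- `l` is a smooth primitive of `ω₀`: a smooth 1-form with `dl = ω₀`. -/
def IsPrimitive (l : OneForm) : Prop :=
  ContDiff ℝ (⊤ : ℕ∞) l ∧ ∀ z u v, fderiv ℝ l z u v - fderiv ℝ l z v u = omega0 u v

/-- Pullback of a 1-form by a map: `(f*l)(z) = l (f z) ∘ Df(z)`. -/
def pullbackForm (f : ℝ × ℝ → ℝ × ℝ) (l : OneForm) : OneForm :=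
  fun z => (l (f z)).comp (fderiv ℝ f z)

/-- The group `Diff_c(ℝ², ω₀)` of smooth, compactly supported, area-preserving
diffeomorphisms of the plane. -/
structure DiffC where
  toFun : ℝ × ℝ → ℝ × ℝ
  invFun : ℝ × ℝ → ℝ × ℝ
  smooth : ContDiff ℝ (⊤ : ℕ∞) toFun
  smooth_inv : ContDiff ℝ (⊤ : ℕ∞) invFun
  left_inv : Function.LeftInverse invFun toFun
  right_inv : Function.RightInverse invFun toFun
  area : ∀ z u v, omega0 (fderiv ℝ toFun z u) (fderiv ℝ toFun z v) = omega0 u v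
  compact : ∃ K : Set (ℝ × ℝ), IsCompact K ∧ ∀ z ∉ K, toFun z = z

/-- `σ` is the action of `f` with respect to the primitive `l`: the unique compactly
supported smooth function with `dσ = f*l − l`. -/
def IsAction (f : ℝ × ℝ → ℝ × ℝ) (l : OneForm) (σ : ℝ × ℝ → ℝ) : Prop :=
  ContDiff ℝ (⊤ : ℕ∞) σ ∧ HasCompactSupport σ ∧
    ∀ z, fderiv ℝ σ z = pullbackForm f l z - l z

/-- The form `φ*l - l` is smooth. -/
theorem aux_smooth (φ : DiffC) (l : OneForm) (hl : IsPrimitive l) :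
    ContDiff ℝ (⊤ : ℕ∞) (fun w => pullbackForm φ.toFun l w - l w) := by
  refine ContDiff.sub ?_ hl.1
  unfold pullbackForm
  exact (hl.1.comp φ.smooth).clm_comp ((contDiff_infty_iff_fderiv.1 φ.smooth).2)

/-- The form `φ*l - l` is closed. -/
theorem aux_closed (φ : DiffC) (l : OneForm) (hl : IsPrimitive l) (z u v : ℝ × ℝ) :
    fderiv ℝ (fun w => pullbackForm φ.toFun l w - l w) z u v =
      fderiv ℝ (fun w => pullbackForm φ.toFun l w - l w) z v u := by
  have hφ : Differentiable ℝ φ.toFun := φ.smooth.differentiable (by simp)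
  have hφ' : Differentiable ℝ (fderiv ℝ φ.toFun) :=
    (contDiff_infty_iff_fderiv.1 φ.smooth).2.differentiable (by simp)
  have hld : Differentiable ℝ l := hl.1.differentiable (by simp)
  have h1 : HasFDerivAt (fun w => l (φ.toFun w))
      ((fderiv ℝ l (φ.toFun z)).comp (fderiv ℝ φ.toFun z)) z :=
    (hld (φ.toFun z)).hasFDerivAt.comp z (hφ z).hasFDerivAt
  have h2 := (h1.clm_comp (hφ' z).hasFDerivAt).sub (hld z).hasFDerivAt
  have h3 : fderiv ℝ (fun w => pullbackForm φ.toFun l w - l w) z = _ := h2.fderiv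
  have hs : IsSymmSndFDerivAt ℝ φ.toFun z :=
    φ.smooth.contDiffAt.isSymmSndFDerivAt (by
      rw [minSmoothness_of_isRCLikeNormedField]
      exact WithTop.coe_le_coe.2 (le_top : (2 : ℕ∞) ≤ ⊤))
  have hs' := hs u v
  have e1 := hl.2 (φ.toFun z) (fderiv ℝ φ.toFun z u) (fderiv ℝ φ.toFun z v)
  have e2 := hl.2 z u v
  have e3 := φ.area z u v
  rw [h3]
  simp only [ContinuousLinearMap.sub_apply, ContinuousLinearMap.add_apply,
    ContinuousLinearMap.comp_apply, ContinuousLinearMap.compL_apply,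
    ContinuousLinearMap.flip_apply, hs']
  linarith

/-- The complement of a box is preconnected. -/
theorem aux_preconnected (R : ℝ) :
    IsPreconnected {z : ℝ × ℝ | R < z.1 ∨ z.1 < -R ∨ R < z.2 ∨ z.2 < -R} := by
  have a1 : IsPreconnected {z : ℝ × ℝ | R < z.1} :=
    (convex_halfSpace_gt (f := Prod.fst) (LinearMap.fst ℝ ℝ ℝ).isLinear R).isPreconnected
  have a2 : IsPreconnected {z : ℝ × ℝ | z.1 < -R} :=
    (convex_halfSpace_lt (f := Prod.fst) (LinearMap.fst ℝ ℝ ℝ).isLinear (-R)).isPreconnected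
  have a3 : IsPreconnected {z : ℝ × ℝ | R < z.2} :=
    (convex_halfSpace_gt (f := Prod.snd) (LinearMap.snd ℝ ℝ ℝ).isLinear R).isPreconnected
  have a4 : IsPreconnected {z : ℝ × ℝ | z.2 < -R} :=
    (convex_halfSpace_lt (f := Prod.snd) (LinearMap.snd ℝ ℝ ℝ).isLinear (-R)).isPreconnected
  have b1 := a1.union (R + 1, R + 1) (by simp) (by simp) a3
  have b2 := a2.union (-R - 1, -R - 1) (by simp) (by simp) a4
  have b3 := b1.union (R + 1, -R - 1) (by simp) (by simp) b2
  convert b3 using 1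
  ext z
  simp only [Set.mem_setOf_eq, Set.mem_union]
  tauto

/-- For `φ ∈ Diff_c(ℝ²,ω₀)` and a smooth primitive `λ` of `ω₀`, the 1-form `φ*λ − λ`
is closed, and there is a unique compactly supported smooth `σ` with `dσ = φ*λ − λ`. -/
theorem statement0 (φ : DiffC) (l : OneForm) (hl : IsPrimitive l) :
    (∀ z u v,
      fderiv ℝ (fun w => pullbackForm φ.toFun l w - l w) z u v =
        fderiv ℝ (fun w => pullbackForm φ.toFun l w - l w) z v u) ∧
    (∃! σ : ℝ × ℝ → ℝ, ContDiff ℝ (⊤ : ℕ∞) σ ∧ HasCompactSupport σ ∧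
      ∀ z, fderiv ℝ σ z = pullbackForm φ.toFun l z - l z) := by
  refine ⟨aux_closed φ l hl, ?_⟩
  have hsm := aux_smooth φ l hl
  obtain ⟨f, hf⟩ := convex_univ.exists_forall_hasFDerivAt_of_fderiv_symmetric isOpen_univ
    (hsm.differentiable (by simp)).differentiableOn (fun a _ x y => aux_closed φ l hl a x y)
  replace hf := fun a => hf a (Set.mem_univ a)
  have hfs : ContDiff ℝ (⊤ : ℕ∞) f := by
    rw [contDiff_infty_iff_fderiv]
    refine ⟨fun a => (hf a).differentiableAt, ?_⟩
    have : fderiv ℝ f = _ := funext fun a => (hf a).fderiv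
    rw [this]
    exact hsm
  obtain ⟨K, hK, hKφ⟩ := φ.compact
  obtain ⟨R, hR⟩ := hK.isBounded.subset_closedBall 0
  set U : Set (ℝ × ℝ) := {z | R < z.1 ∨ z.1 < -R ∨ R < z.2 ∨ z.2 < -R} with hU
  have hUo : IsOpen U := by
    refine (isOpen_lt continuous_const continuous_fst).union
      ((isOpen_lt continuous_fst continuous_const).union
      ((isOpen_lt continuous_const continuous_snd).union
      (isOpen_lt continuous_snd continuous_const)))
  have hUc : ∀ z, z ∉ U → z ∈ Metric.closedBall (0 : ℝ × ℝ) R := by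
    intro z hz
    simp only [hU, Set.mem_setOf_eq, not_or, not_lt] at hz
    simp only [mem_closedBall_zero_iff, Prod.norm_def, Real.norm_eq_abs, sup_le_iff, abs_le]
    tauto
  have hUK : ∀ z ∈ U, z ∉ K := by
    intro z hz hzK
    have := hR hzK
    simp only [mem_closedBall_zero_iff, Prod.norm_def, Real.norm_eq_abs, sup_le_iff, abs_le] at this
    rcases hz with h | h | h | h <;> linarith [this.1.1, this.1.2, this.2.1, this.2.2]
  have hzero : ∀ z ∈ U, pullbackForm φ.toFun l z - l z = 0 := by
    intro z hz
    have he : φ.toFun =ᶠ[nhds z] id := by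
      filter_upwards [hUo.mem_nhds hz] with w hw using hKφ w (hUK w hw)
    rw [pullbackForm, he.fderiv_eq, he.eq_of_nhds]
    ext <;> simp
  obtain ⟨c, hc⟩ := hUo.exists_is_const_of_fderiv_eq_zero (aux_preconnected R)
    (f := f) (fun a _ => (hf a).differentiableAt.differentiableWithinAt)
    (fun z hz => by rw [(hf z).fderiv, hzero z hz]; rfl)
  refine ⟨fun z => f z - c, ⟨hfs.sub contDiff_const, ?_, ?_⟩, ?_⟩
  · refine HasCompactSupport.intro (isCompact_closedBall (0 : ℝ × ℝ) R) fun z hz => ?_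
    have : z ∈ U := by
      by_contra h
      exact hz (hUc z h)
    simp [hc z this]
  · intro z
    exact ((hf z).sub_const c).fderiv
  · rintro g ⟨hg, hgc, hgd⟩
    have hd : Differentiable ℝ (fun z => g z - (f z - c)) := fun z =>
      (hg.differentiable (by simp) z).sub ((hf z).differentiableAt.sub_const c)
    have hk := is_const_of_fderiv_eq_zero (𝕜 := ℝ) hd (fun z => by
      have := ((hg.differentiable (by simp) z).hasFDerivAt.sub ((hf z).sub_const c)).fderiv
      rw [hgd z, sub_self] at this
      exact this)
    obtain ⟨S, hS⟩ := hgc.isCompact.isBounded.subset_closedBall 0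
    set p : ℝ × ℝ := (max R S + 1, 0)
    have hp : p ∈ U := Or.inl (by
      have := le_max_left R S
      show R < max R S + 1
      linarith)
    have hgp : g p = 0 := by
      apply image_eq_zero_of_notMem_tsupport
      intro h
      have := hS h
      simp only [mem_closedBall_zero_iff, Prod.norm_def, Real.norm_eq_abs, sup_le_iff,
        abs_le] at this
      have h1 : max R S + 1 ≤ S := this.1.2
      linarith [le_max_right R S]
    funext z
    have := hk z p
    simp only [hgp, hc p hp] at this
    linarith
end
end

section
/- Let φ ∈ Diff_c(ℝ²,ω₀). Then for any two smooth primitives λ and λ' of ω₀ the integrals of the corresponding actions over ℝ² agree: ∫_{ℝ²} σ_{φ,λ} dx dy = ∫_{ℝ²} σ_{φ,λ'} dx dy. Consequently the Calabi invariant CAL(φ) = ∫_{ℝ²} σ_{φ,λ} dx dy is well defined, independent of the choice of primitive λ. -/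
open MeasureTheory

noncomputable section

lemma det_eq_omega0 (A : (ℝ × ℝ) →L[ℝ] (ℝ × ℝ)) :
    A.det = omega0 (A (1, 0)) (A (0, 1)) := by
  rw [ContinuousLinearMap.det, ← LinearMap.det_toMatrix (Module.Basis.finTwoProd ℝ),
    Matrix.det_fin_two]
  simp [LinearMap.toMatrix_apply, omega0]
  ring

lemma integral_comp_diffC (φ : DiffC) (g : ℝ × ℝ → ℝ) :
    (∫ z, g (φ.toFun z) = ∫ z, g z) ∧ (Integrable g → Integrable fun z => g (φ.toFun z)) := by
  have hd : ∀ x ∈ (Set.univ : Set (ℝ × ℝ)),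
      HasFDerivWithinAt φ.toFun (fderiv ℝ φ.toFun x) Set.univ x := fun x _ =>
    ((φ.smooth.differentiable (by simp)) x).hasFDerivAt.hasFDerivWithinAt
  have hi : Set.InjOn φ.toFun Set.univ := φ.left_inv.injective.injOn
  have hs : φ.toFun '' Set.univ = Set.univ := by
    rw [Set.image_univ]; exact φ.right_inv.surjective.range_eq
  have hdet : ∀ x, (fderiv ℝ φ.toFun x).det = 1 := fun x => by
    rw [det_eq_omega0, φ.area]; simp [omega0]
  constructor
  · have := integral_image_eq_integral_abs_det_fderiv_smul volume MeasurableSet.univ hd hi g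
    rw [hs] at this
    simpa [hdet] using this.symm
  · intro hg
    have := integrableOn_image_iff_integrableOn_abs_det_fderiv_smul volume MeasurableSet.univ hd hi g
    rw [hs] at this
    simpa [hdet, hg] using this

/-- The integral of the action does not depend on the choice of the primitive of `ω₀`;
hence the Calabi invariant `CAL(φ) = ∫_{ℝ²} σ_{φ,λ}` is well defined. -/
theorem statement7 (φ : DiffC) (l l' : OneForm)
    (hl : IsPrimitive l) (hl' : IsPrimitive l')
    (σ σ' : ℝ × ℝ → ℝ)
    (hσ : IsAction φ.toFun l σ) (hσ' : IsAction φ.toFun l' σ') :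
    ∫ z : ℝ × ℝ, σ z = ∫ z : ℝ × ℝ, σ' z := by
  obtain ⟨hls, hlc⟩ := hl
  obtain ⟨hls', hlc'⟩ := hl'
  obtain ⟨hσs, hσc, hσd⟩ := hσ
  obtain ⟨hσs', hσc', hσd'⟩ := hσ'
  obtain ⟨K, hK, hKφ⟩ := φ.compact
  have dl : Differentiable ℝ l := hls.differentiable (by simp)
  have dl' : Differentiable ℝ l' := hls'.differentiable (by simp)
  have dσ : Differentiable ℝ σ := hσs.differentiable (by simp)
  have dσ' : Differentiable ℝ σ' := hσs'.differentiable (by simp)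
  have dφ : Differentiable ℝ φ.toFun := φ.smooth.differentiable (by simp)
  obtain ⟨h, hh⟩ : ∃ h : ℝ × ℝ → ℝ, ∀ a ∈ (Set.univ : Set (ℝ × ℝ)),
      HasFDerivAt h ((l - l') a) a := by
    refine Convex.exists_forall_hasFDerivAt_of_fderiv_symmetric convex_univ isOpen_univ
      (dl.sub dl').differentiableOn ?_
    intro a _ x y
    rw [fderiv_sub (dl a) (dl' a)]
    have h1 := hlc a x y
    have h2 := hlc' a x y
    simp only [sub_apply]
    linarith
  replace hh := fun a => hh a (Set.mem_univ a)
  have hhc : Continuous h := continuous_iff_continuousAt.2 fun a => (hh a).continuousAt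
  -- the difference is constant
  have hG : ∀ z, HasFDerivAt (fun z => (σ z - σ' z) - (h (φ.toFun z) - h z))
      (0 : (ℝ × ℝ) →L[ℝ] ℝ) z := by
    intro z
    have h1 := ((dσ z).hasFDerivAt.sub (dσ' z).hasFDerivAt).sub
      (((hh (φ.toFun z)).comp z (dφ z).hasFDerivAt).sub (hh z))
    refine h1.congr_fderiv ?_
    rw [hσd, hσd']
    ext <;> simp [pullbackForm] <;> ring
  have hconst := is_const_of_fderiv_eq_zero (𝕜 := ℝ)
    (fun z => (hG z).differentiableAt) (fun z => (hG z).fderiv)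
  obtain ⟨p, hp⟩ : ∃ p, p ∉ K ∪ tsupport σ ∪ tsupport σ' := by
    have hc : IsCompact (K ∪ tsupport σ ∪ tsupport σ') := (hK.union hσc).union hσc'
    exact (Set.ne_univ_iff_exists_notMem _).1 hc.ne_univ
  simp only [Set.mem_union, not_or] at hp
  obtain ⟨⟨hp1, hp2⟩, hp3⟩ := hp
  have key : ∀ z, σ z - σ' z = h (φ.toFun z) - h z := by
    intro z
    have := hconst z p
    simp only [hKφ p hp1, image_eq_zero_of_notMem_tsupport hp2,
      image_eq_zero_of_notMem_tsupport hp3] at this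
    linarith
  set g : ℝ × ℝ → ℝ := K.indicator h with hg
  have gint : Integrable g :=
    (integrable_indicator_iff hK.measurableSet).2 (hhc.continuousOn.integrableOn_compact hK)
  have key2 : ∀ z, σ z - σ' z = g (φ.toFun z) - g z := by
    intro z
    rw [key]
    by_cases hz : z ∈ K
    · have hz' : φ.toFun z ∈ K := by
        by_contra hn
        have := φ.left_inv.injective (hKφ _ hn)
        rw [this] at hn
        exact hn hz
      simp [hg, hz, hz']
    · simp [hKφ z hz]
  have e1 := integral_sub (hσs.continuous.integrable_of_hasCompactSupport hσc (μ := volume))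
    (hσs'.continuous.integrable_of_hasCompactSupport hσc')
  have e2 := integral_sub ((integral_comp_diffC φ g).2 gint) gint
  rw [(integral_comp_diffC φ g).1, sub_self] at e2
  simp only [key2] at e1
  rw [e2] at e1
  linarith
end
end

section
/- Let φ, ψ ∈ Diff_c(ℝ²,ω₀). Then the Calabi invariant is additive under composition: CAL(ψ∘φ) = CAL(ψ) + CAL(φ). In other words, CAL : Diff_c(ℝ²,ω₀) → ℝ is a group homomorphism. -/
open MeasureTheory

noncomputable section

/-- An area-preserving linear map of the plane has determinant one. -/
theorem det_eq_one_of_area (L : (ℝ × ℝ) →L[ℝ] (ℝ × ℝ))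
    (h : ∀ u v, omega0 (L u) (L v) = omega0 u v) : L.det = 1 := by
  have h1 := h (1, 0) (0, 1)
  change LinearMap.det (L : (ℝ × ℝ) →ₗ[ℝ] (ℝ × ℝ)) = 1
  rw [← LinearMap.det_toMatrix (Module.Basis.finTwoProd ℝ), Matrix.det_fin_two]
  simp [LinearMap.toMatrix_apply, omega0] at h1 ⊢
  linarith

/-- Elements of `DiffC` preserve integrals. -/
theorem DiffC.integral_comp (φ : DiffC) (g : ℝ × ℝ → ℝ) :
    ∫ z : ℝ × ℝ, g (φ.toFun z) = ∫ z : ℝ × ℝ, g z := by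
  have hd : Differentiable ℝ φ.toFun := φ.smooth.differentiable (by simp)
  have h := integral_image_eq_integral_abs_det_fderiv_smul (volume : Measure (ℝ × ℝ))
    MeasurableSet.univ (fun z _ => (hd z).hasFDerivAt.hasFDerivWithinAt)
    (φ.left_inv.injective.injOn) g
  rw [Set.image_univ, φ.right_inv.surjective.range_eq] at h
  simp only [Measure.restrict_univ] at h
  rw [h]
  congr 1
  ext z
  rw [det_eq_one_of_area _ (φ.area z)]
  simp

/-- The underlying homeomorphism. -/
def DiffC.toHomeo (φ : DiffC) : (ℝ × ℝ) ≃ₜ (ℝ × ℝ) where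
  toFun := φ.toFun
  invFun := φ.invFun
  left_inv := φ.left_inv
  right_inv := φ.right_inv
  continuous_toFun := φ.smooth.continuous
  continuous_invFun := φ.smooth_inv.continuous

/-- The Calabi invariant is additive under composition:
`CAL(ψ∘φ) = CAL(ψ) + CAL(φ)`. -/
theorem statement8 (φ ψ : DiffC) (l : OneForm) (hl : IsPrimitive l)
    (σφ σψ σc : ℝ × ℝ → ℝ)
    (hφ : IsAction φ.toFun l σφ) (hψ : IsAction ψ.toFun l σψ)
    (hc : IsAction (ψ.toFun ∘ φ.toFun) l σc) :
    ∫ z : ℝ × ℝ, σc z = (∫ z : ℝ × ℝ, σψ z) + ∫ z : ℝ × ℝ, σφ z := by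
  obtain ⟨sφ, cφ, dφ⟩ := hφ
  obtain ⟨sψ, cψ, dψ⟩ := hψ
  obtain ⟨sc, cc, dc⟩ := hc
  have hne : ((⊤ : ℕ∞) : WithTop ℕ∞) ≠ 0 := by simp
  have Dφ : Differentiable ℝ φ.toFun := φ.smooth.differentiable hne
  have Dψ : Differentiable ℝ ψ.toFun := ψ.smooth.differentiable hne
  have Eφ := sφ.differentiable hne
  have Eψ := sψ.differentiable hne
  have Ec := sc.differentiable hne
  have ccomp : HasCompactSupport (σψ ∘ φ.toFun) := cψ.comp_homeomorph φ.toHomeo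
  have scomp : Continuous (σψ ∘ φ.toFun) := sψ.continuous.comp φ.smooth.continuous
  set g : ℝ × ℝ → ℝ := σc - (σψ ∘ φ.toFun + σφ) with hg
  have gc : HasCompactSupport g := cc.sub (ccomp.add cφ)
  have gder : ∀ z, HasFDerivAt g (0 : (ℝ × ℝ) →L[ℝ] ℝ) z := by
    intro z
    have h1 := (Ec z).hasFDerivAt.sub
      (((Eψ (φ.toFun z)).hasFDerivAt.comp z (Dφ z).hasFDerivAt).add (Eφ z).hasFDerivAt)
    refine h1.congr_fderiv ?_
    rw [dc, dφ, dψ]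
    refine ContinuousLinearMap.ext fun v => ?_
    simp [pullbackForm, fderiv_comp z (Dψ (φ.toFun z)) (Dφ z)]
  have gconst : ∀ x y, g x = g y :=
    is_const_of_fderiv_eq_zero (fun z => (gder z).differentiableAt) (fun z => (gder z).fderiv)
  have hex : ∃ x, x ∉ tsupport g := by
    by_contra! hcon
    exact noncompact_univ (ℝ × ℝ) ((Set.eq_univ_of_forall hcon) ▸ gc.isCompact)
  obtain ⟨x, hx⟩ := hex
  have gz : ∀ z, σc z = σψ (φ.toFun z) + σφ z := by
    intro z
    have h1 := (gconst z x).trans (image_eq_zero_of_notMem_tsupport hx)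
    simp [hg] at h1
    linarith
  have hadd := integral_add (μ := (volume : Measure (ℝ × ℝ)))
    (scomp.integrable_of_hasCompactSupport ccomp)
    (sφ.continuous.integrable_of_hasCompactSupport cφ)
  rw [← φ.integral_comp σψ]
  exact (integral_congr_ae (Filter.Eventually.of_forall gz)).trans hadd
end
end

section
/- Let δ ∈ (0,1/2) and let χ : [0,∞) → ℝ be a smooth convex function which is supported in [0,1) and satisfies χ(s) = 1 − δ − s for all s ∈ [0,1−2δ]. Then for every s ∈ [0,∞) one has 0 ≤ χ(s) − s·χ'(s) ≤ 1 − δ, with equality χ(s) − s·χ'(s) = 1 − δ for all s ∈ [0,1−2δ]; moreover, for every s ∈ [0,∞) one has −(1−δ)·χ'(s) ≤ χ(s) − s·χ'(s) ≤ −χ'(s). -/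
noncomputable section

/-- Further properties of the cut-off functions `χ_δ`: if `χ : [0,∞) → ℝ` is smooth,
convex, supported in `[0,1)` and equal to `1 − δ − s` on `[0,1−2δ]`, then
`0 ≤ χ(s) − sχ'(s) ≤ 1 − δ` for all `s ≥ 0`, with equality `χ(s) − sχ'(s) = 1 − δ` on
`[0,1−2δ]`, and moreover `−(1−δ)χ'(s) ≤ χ(s) − sχ'(s) ≤ −χ'(s)` for all `s ≥ 0`. -/
theorem statement17 (δ : ℝ) (hδ : δ ∈ Set.Ioo (0 : ℝ) (1 / 2))
    (χ : ℝ → ℝ) (hsm : ContDiff ℝ (⊤ : ℕ∞) χ)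
    (hconv : ConvexOn ℝ (Set.Ici (0 : ℝ)) χ)
    (hsupp : ∃ η > (0 : ℝ), ∀ s, 1 - η ≤ s → χ s = 0)
    (hlin : ∀ s ∈ Set.Icc (0 : ℝ) (1 - 2 * δ), χ s = 1 - δ - s) :
    (∀ s, 0 ≤ s → 0 ≤ χ s - s * deriv χ s ∧ χ s - s * deriv χ s ≤ 1 - δ) ∧
    (∀ s ∈ Set.Icc (0 : ℝ) (1 - 2 * δ), χ s - s * deriv χ s = 1 - δ) ∧
    (∀ s, 0 ≤ s →
      -(1 - δ) * deriv χ s ≤ χ s - s * deriv χ s ∧ χ s - s * deriv χ s ≤ -deriv χ s) := by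
  obtain ⟨hδ0, hδ1⟩ := hδ
  obtain ⟨η, hη, hz⟩ := hsupp
  have hd : Differentiable ℝ χ := hsm.differentiable (by simp)
  -- the tangent line inequality
  have T : ∀ s t, 0 ≤ s → 0 ≤ t → χ s + deriv χ s * (t - s) ≤ χ t := by
    intro s t hs ht
    rcases lt_trichotomy s t with h | h | h
    · have h1 := hconv.deriv_le_slope (Set.mem_Ici.2 hs) (Set.mem_Ici.2 ht) h (hd s)
      rw [slope_def_field, le_div_iff₀ (by linarith)] at h1
      linarith
    · subst h; simp
    · have h1 := hconv.slope_le_deriv (Set.mem_Ici.2 ht) (Set.mem_Ici.2 hs) h (hd s)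
      rw [slope_def_field, div_le_iff₀ (by linarith)] at h1
      linarith
  have hone : deriv χ 1 = 0 := by
    have : χ =ᶠ[nhds 1] fun _ => (0 : ℝ) := by
      filter_upwards [Ioi_mem_nhds (show 1 - η < 1 by linarith)] with x hx
      exact hz x (le_of_lt hx)
    rw [this.deriv_eq]; simp
  have hneg1 : ∀ s ∈ Set.Icc (0 : ℝ) (1 - 2 * δ), deriv χ s = -1 := by
    intro s hs
    have h1 : HasDerivWithinAt χ (deriv χ s) (Set.Icc (0 : ℝ) (1 - 2 * δ)) s :=
      (hd s).hasDerivAt.hasDerivWithinAt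
    have h2 : HasDerivWithinAt χ (-1) (Set.Icc (0 : ℝ) (1 - 2 * δ)) s :=
      (((hasDerivAt_id s).const_sub (1 - δ)).hasDerivWithinAt).congr hlin (hlin s hs)
    exact (uniqueDiffOn_Icc (by linarith) s hs).eq_deriv _ h1 h2
  have h0mem : (0 : ℝ) ∈ Set.Icc (0 : ℝ) (1 - 2 * δ) := ⟨le_rfl, by linarith⟩
  have hχ0 : χ 0 = 1 - δ := by rw [hlin 0 h0mem]; ring
  have hd0 := hneg1 0 h0mem
  have hχ1 : χ 1 = 0 := hz 1 (by linarith)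
  have hpos : ∀ s, 0 ≤ s → 0 ≤ χ s := by
    intro s hs
    have := T 1 s (by norm_num) hs
    rw [hone, hχ1] at this
    linarith
  have hdn : ∀ s, 0 ≤ s → deriv χ s ≤ 0 := by
    intro s hs
    have h1 := T s (s + 1) hs (by linarith)
    rw [hz (s + 1) (by linarith)] at h1
    linarith [hpos s hs]
  have hlow : ∀ s, 0 ≤ s → 1 - δ - s ≤ χ s := by
    intro s hs
    have h1 := T 0 s le_rfl hs
    rw [hχ0, hd0] at h1
    linarith
  have hdge : ∀ s, 0 ≤ s → -1 ≤ deriv χ s := by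
    intro s hs
    rcases hs.eq_or_lt with h | h
    · rw [← h, hd0]
    · have h1 := T s 0 hs le_rfl
      rw [hχ0] at h1
      have h2 := hlow s hs
      by_contra hc
      nlinarith
  refine ⟨fun s hs => ⟨?_, ?_⟩, fun s hs => ?_, fun s hs => ⟨?_, ?_⟩⟩
  · nlinarith [hpos s hs, mul_nonneg hs (neg_nonneg.2 (hdn s hs))]
  · have h1 := T s 0 hs le_rfl
    rw [hχ0] at h1
    linarith
  · rw [hneg1 s hs, hlin s hs]; ring
  · rcases le_total s (1 - δ) with h | h
    · nlinarith [hlow s hs, mul_nonneg (sub_nonneg.2 h) (by linarith [hdge s hs] : 0 ≤ deriv χ s + 1)]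
    · nlinarith [hpos s hs, mul_nonneg (sub_nonneg.2 h) (neg_nonneg.2 (hdn s hs))]
  · have h1 := T s 1 hs (by norm_num)
    rw [hχ1] at h1
    linarith
end
end

section
/- For each natural number n ≥ 2 and each real ε > 0 there exist a smooth 1-form λ on ℝ² with dλ = ω₀ such that λ − λ₀ is supported in a compact subset of the open unit disk, and a map φ ∈ Diff_c(𝔻,ω₀), with the following properties: (i) the action satisfies −π + π/n < σ_{φ,λ}(z) < π/n for all z ∈ ℝ², and σ_{φ,λ}(z₀) ≥ 0 for every fixed point z₀ of φ; (ii) the Calabi invariant satisfies −π²(1 − 1/n) < CAL(φ) < −π²(1 − 1/n) + ε; (iii) the action is invariant under φ, i.e. σ_{φ,λ}∘φ = σ_{φ,λ}; (iv) if z₀ is a fixed point of φ^k for some positive integer k but z₀ is not a fixed point of φ, then k ≥ n. -/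
open MeasureTheory

noncomputable section

/-- The standard rotationally invariant primitive `λ₀ = (1/2)(x dy − y dx)` of `ω₀`. -/
def lambda0 : OneForm := fun z =>
  (z.1 / 2) • ContinuousLinearMap.snd ℝ ℝ ℝ - (z.2 / 2) • ContinuousLinearMap.fst ℝ ℝ ℝ

/-- The open unit disk in `ℝ²`. -/
def openDisk : Set (ℝ × ℝ) := {z : ℝ × ℝ | z.1 ^ 2 + z.2 ^ 2 < 1}


/-- the vector `z - p`, squared length -/
def sqd (p : ℂ) (z : ℝ × ℝ) : ℝ := (z.1 - p.re) ^ 2 + (z.2 - p.im) ^ 2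

/-- the local potential -/
def vv (p : ℂ) (z : ℝ × ℝ) : ℝ := -(1/2) * (p.re * z.2 - p.im * z.1)

/-- twist map -/
def tw (p : ℂ) (g : ℝ → ℝ) (z : ℝ × ℝ) : ℝ × ℝ :=
  (p.re + (Real.cos (g (sqd p z)) * (z.1 - p.re) - Real.sin (g (sqd p z)) * (z.2 - p.im)),
   p.im + (Real.sin (g (sqd p z)) * (z.1 - p.re) + Real.cos (g (sqd p z)) * (z.2 - p.im)))

lemma sqd_tw (p : ℂ) (g : ℝ → ℝ) (z : ℝ × ℝ) : sqd p (tw p g z) = sqd p z := by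
  have h := Real.sin_sq_add_cos_sq (g (sqd p z))
  generalize hh : g (sqd p z) = a at *
  simp only [sqd, tw] at *
  rw [hh]
  linear_combination ((z.1 - p.re) ^ 2 + (z.2 - p.im) ^ 2) * h

lemma tw_inv (p : ℂ) (g : ℝ → ℝ) (z : ℝ × ℝ) : tw p (fun s => - g s) (tw p g z) = z := by
  have h := Real.sin_sq_add_cos_sq (g (sqd p z))
  have h2 := sqd_tw p g z
  rw [tw, h2]
  simp only [tw, Real.cos_neg, Real.sin_neg]
  ext
  · linear_combination (z.1 - p.re) * h
  · linear_combination (z.2 - p.im) * h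

lemma tw_smooth (p : ℂ) (g : ℝ → ℝ) (hg : ContDiff ℝ (⊤ : ℕ∞) g) :
    ContDiff ℝ (⊤ : ℕ∞) (tw p g) := by
  have hs : ContDiff ℝ (⊤ : ℕ∞) (sqd p) := by unfold sqd; fun_prop
  have hgs : ContDiff ℝ (⊤ : ℕ∞) (fun z => g (sqd p z)) := hg.comp hs
  unfold tw
  fun_prop

lemma sqd_hasFDerivAt (p : ℂ) (z : ℝ × ℝ) : HasFDerivAt (sqd p)
    ((2 * (z.1 - p.re)) • ContinuousLinearMap.fst ℝ ℝ ℝ +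
      (2 * (z.2 - p.im)) • ContinuousLinearMap.snd ℝ ℝ ℝ) z := by
  have hx : HasFDerivAt (fun z : ℝ × ℝ => z.1 - p.re) (ContinuousLinearMap.fst ℝ ℝ ℝ) z :=
    hasFDerivAt_fst.sub_const _
  have hy : HasFDerivAt (fun z : ℝ × ℝ => z.2 - p.im) (ContinuousLinearMap.snd ℝ ℝ ℝ) z :=
    hasFDerivAt_snd.sub_const _
  have := (hx.pow 2).add (hy.pow 2)
  refine this.congr_fderiv ?_
  ext <;> simp

lemma tw_fderiv (p : ℂ) (g : ℝ → ℝ) (hg : ContDiff ℝ (⊤ : ℕ∞) g) (z u : ℝ × ℝ) :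
    fderiv ℝ (tw p g) z u =
    let c := Real.cos (g (sqd p z))
    let s := Real.sin (g (sqd p z))
    let x := z.1 - p.re
    let y := z.2 - p.im
    let d := deriv g (sqd p z) * (2 * x * u.1 + 2 * y * u.2)
    (c * u.1 - s * u.2 - d * (s * x + c * y), s * u.1 + c * u.2 + d * (c * x - s * y)) := by
  have hx : HasFDerivAt (fun z : ℝ × ℝ => z.1 - p.re) (ContinuousLinearMap.fst ℝ ℝ ℝ) z :=
    hasFDerivAt_fst.sub_const _
  have hy : HasFDerivAt (fun z : ℝ × ℝ => z.2 - p.im) (ContinuousLinearMap.snd ℝ ℝ ℝ) z :=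
    hasFDerivAt_snd.sub_const _
  have hd : HasDerivAt g (deriv g (sqd p z)) (sqd p z) :=
    ((hg.differentiable (by simp)) _).hasDerivAt
  have hG := hd.comp_hasFDerivAt z (sqd_hasFDerivAt p z)
  have hc := hG.cos
  have hs := hG.sin
  have h1 := ((hc.mul hx).sub (hs.mul hy)).const_add p.re
  have h2 := ((hs.mul hx).add (hc.mul hy)).const_add p.im
  have h := h1.prodMk h2
  have h' : HasFDerivAt (tw p g) _ z := h
  rw [h'.fderiv]
  ext
  · simp
    ring
  · simp
    ring

/-- composition in DiffC -/
def DiffC.comp (f h : DiffC) : DiffC where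
  toFun := f.toFun ∘ h.toFun
  invFun := h.invFun ∘ f.invFun
  smooth := f.smooth.comp h.smooth
  smooth_inv := h.smooth_inv.comp f.smooth_inv
  left_inv := f.left_inv.comp h.left_inv
  right_inv := f.right_inv.comp h.right_inv
  area := by
    intro z u v
    rw [fderiv_comp _ ((f.smooth.differentiable (by simp)) _)
      ((h.smooth.differentiable (by simp)) _)]
    simp [f.area, h.area]
  compact := by
    obtain ⟨K, hK, h1⟩ := f.compact
    obtain ⟨L, hL, h2⟩ := h.compact
    refine ⟨K ∪ L, hK.union hL, fun z hz => ?_⟩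
    simp only [Set.mem_union, not_or] at hz
    simp [h2 z hz.2, h1 z hz.1]

def DiffC.one : DiffC where
  toFun := id
  invFun := id
  smooth := contDiff_id
  smooth_inv := contDiff_id
  left_inv := fun _ => rfl
  right_inv := fun _ => rfl
  area := by intro z u v; simp
  compact := ⟨∅, isCompact_empty, fun z _ => rfl⟩

lemma action_one (l : OneForm) : IsAction DiffC.one.toFun l (fun _ => 0) := by
  refine ⟨contDiff_const, HasCompactSupport.zero, fun z => ?_⟩
  simp [pullbackForm, DiffC.one]

lemma comp_compact (f : DiffC) (σ : ℝ × ℝ → ℝ) (h : HasCompactSupport σ) :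
    HasCompactSupport (fun z => σ (f.toFun z)) := by
  let e : (ℝ × ℝ) ≃ₜ (ℝ × ℝ) :=
    { toFun := f.toFun, invFun := f.invFun, left_inv := f.left_inv, right_inv := f.right_inv,
      continuous_toFun := f.smooth.continuous, continuous_invFun := f.smooth_inv.continuous }
  exact h.comp_homeomorph e

lemma action_comp (l : OneForm) (f h : DiffC) (σ τ : ℝ × ℝ → ℝ)
    (hf : IsAction f.toFun l σ) (hh : IsAction h.toFun l τ) :
    IsAction (f.comp h).toFun l (fun z => σ (h.toFun z) + τ z) := by
  refine ⟨(hf.1.comp h.smooth).add hh.1, (comp_compact h σ hf.2.1).add hh.2.1, fun z => ?_⟩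
  have d1 := (hf.1.differentiable (by simp)) (h.toFun z)
  have d2 := (hh.1.differentiable (by simp)) z
  have d3 := (h.smooth.differentiable (by simp)) z
  have d4 := (f.smooth.differentiable (by simp)) (h.toFun z)
  have e : fderiv ℝ (fun z => σ (h.toFun z) + τ z) z =
      (fderiv ℝ σ (h.toFun z)).comp (fderiv ℝ h.toFun z) + fderiv ℝ τ z :=
    ((d1.hasFDerivAt.comp z d3.hasFDerivAt).add d2.hasFDerivAt).fderiv
  rw [e, hf.2.2, hh.2.2]
  simp only [pullbackForm, DiffC.comp]
  rw [fderiv_comp _ d4 d3]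
  ext <;> simp

lemma action_add (l : OneForm) (f : DiffC) (σ U : ℝ × ℝ → ℝ)
    (hf : IsAction f.toFun l σ) (hU : ContDiff ℝ (⊤ : ℕ∞) U) (hUc : HasCompactSupport U) :
    IsAction f.toFun (fun z => l z + fderiv ℝ U z)
      (fun z => σ z + (U (f.toFun z) - U z)) := by
  refine ⟨hf.1.add ((hU.comp f.smooth).sub hU),
    hf.2.1.add ((comp_compact f U hUc).sub hUc), fun z => ?_⟩
  have d1 := (hf.1.differentiable (by simp)) z
  have d2 := (hU.differentiable (by simp)) z
  have d3 := (f.smooth.differentiable (by simp)) z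
  have d4 := (hU.differentiable (by simp)) (f.toFun z)
  have e : fderiv ℝ (fun z => σ z + (U (f.toFun z) - U z)) z = fderiv ℝ σ z +
      ((fderiv ℝ U (f.toFun z)).comp (fderiv ℝ f.toFun z) - fderiv ℝ U z) :=
    (d1.hasFDerivAt.add ((d4.hasFDerivAt.comp z d3.hasFDerivAt).sub d2.hasFDerivAt)).fderiv
  rw [e, hf.2.2]
  simp only [pullbackForm]
  ext <;> simp <;> ring

lemma sqd_compact (p : ℂ) (b : ℝ) : IsCompact {z | sqd p z ≤ b} := by
  refine (isCompact_closedBall ((p.re, p.im) : ℝ × ℝ) (b + 1)).of_isClosed_subset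
    (isClosed_le (by unfold sqd; fun_prop) continuous_const) ?_
  intro z hz
  simp only [Set.mem_ofPred_eq, sqd] at hz
  rw [mem_closedBall_iff_norm, Prod.norm_def, max_le_iff]
  simp only [Prod.fst_sub, Prod.snd_sub, Real.norm_eq_abs]
  constructor
  · rw [abs_le]; constructor <;> nlinarith [sq_nonneg (z.1 - p.re + 1), sq_nonneg (z.1 - p.re - 1), sq_nonneg (z.2 - p.im), sq_nonneg (z.1 - p.re)]
  · rw [abs_le]; constructor <;> nlinarith [sq_nonneg (z.2 - p.im + 1), sq_nonneg (z.2 - p.im - 1), sq_nonneg (z.2 - p.im), sq_nonneg (z.1 - p.re)]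

lemma tw_eq_self (p : ℂ) (g : ℝ → ℝ) (z : ℝ × ℝ) (h : g (sqd p z) = 0) : tw p g z = z := by
  simp [tw, h]

/-- the twist as an element of DiffC -/
def twD (p : ℂ) (g : ℝ → ℝ) (hg : ContDiff ℝ (⊤ : ℕ∞) g) (b : ℝ)
    (hb : ∀ s, b ≤ s → g s = 0) : DiffC where
  toFun := tw p g
  invFun := tw p (fun s => - g s)
  smooth := tw_smooth p g hg
  smooth_inv := tw_smooth p _ hg.neg
  left_inv := tw_inv p g
  right_inv := by
    intro z
    have := tw_inv p (fun s => - g s) z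
    simpa using this
  area := by
    intro z u v
    rw [tw_fderiv p g hg, tw_fderiv p g hg]
    have h := Real.sin_sq_add_cos_sq (g (sqd p z))
    simp only [omega0]
    generalize Real.sin (g (sqd p z)) = s at *
    generalize Real.cos (g (sqd p z)) = c at *
    linear_combination (u.1 * v.2 - u.2 * v.1) * h
  compact := ⟨_, sqd_compact p b, fun z hz => tw_eq_self p g z (hb _ (not_le.1 hz).le)⟩

lemma vv_hasFDerivAt (p : ℂ) (z : ℝ × ℝ) : HasFDerivAt (vv p)
    ((-(1/2) * p.re) • ContinuousLinearMap.snd ℝ ℝ ℝ +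
      ((1/2) * p.im) • ContinuousLinearMap.fst ℝ ℝ ℝ) z := by
  have e : vv p = ((-(1/2) * p.re) • ContinuousLinearMap.snd ℝ ℝ ℝ +
      ((1/2) * p.im) • ContinuousLinearMap.fst ℝ ℝ ℝ : ℝ × ℝ →L[ℝ] ℝ) := by
    ext z; simp [vv]; ring
  rw [e]
  exact ContinuousLinearMap.hasFDerivAt _

lemma tw_action (p : ℂ) (g S : ℝ → ℝ) (hg : ContDiff ℝ (⊤ : ℕ∞) g) (b : ℝ)
    (hb : ∀ s, b ≤ s → g s = 0) (hS : ContDiff ℝ (⊤ : ℕ∞) S)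
    (hSb : ∀ s, b ≤ s → S s = 0) (hSd : ∀ s, deriv S s = s * deriv g s / 2) :
    IsAction (twD p g hg b hb).toFun lambda0
      (fun z => S (sqd p z) - (vv p (tw p g z) - vv p z)) := by
  have hs : ContDiff ℝ (⊤ : ℕ∞) (sqd p) := by unfold sqd; fun_prop
  have hv : ContDiff ℝ (⊤ : ℕ∞) (vv p) := by unfold vv; fun_prop
  have ht := tw_smooth p g hg
  refine ⟨(hS.comp hs).sub ((hv.comp ht).sub hv), ?_, fun z => ?_⟩
  · refine HasCompactSupport.intro (sqd_compact p b) fun z hz => ?_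
    have hz' : b ≤ sqd p z := (not_le.1 hz).le
    simp [hSb _ hz', tw_eq_self p g z (hb _ hz')]
  · have hd : HasDerivAt S (deriv S (sqd p z)) (sqd p z) :=
      ((hS.differentiable (by simp)) _).hasDerivAt
    have hG := hd.comp_hasFDerivAt z (sqd_hasFDerivAt p z)
    have htd := ((ht.differentiable (by simp)) z).hasFDerivAt
    have e := hG.sub (((vv_hasFDerivAt p (tw p g z)).comp z htd).sub (vv_hasFDerivAt p z))
    have e' : fderiv ℝ (fun z => S (sqd p z) - (vv p (tw p g z) - vv p z)) z = _ := e.fderiv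
    rw [e', hSd]
    refine ContinuousLinearMap.ext fun u => ?_
    have h := Real.sin_sq_add_cos_sq (g (sqd p z))
    have hq : sqd p z = (z.1 - p.re) ^ 2 + (z.2 - p.im) ^ 2 := rfl
    simp [pullbackForm, twD, lambda0, tw_fderiv p g hg]
    simp only [tw]
    generalize Real.sin (g (sqd p z)) = s at *
    generalize Real.cos (g (sqd p z)) = c at *
    generalize deriv g (sqd p z) = d at *
    rw [hq]
    linear_combination (-(1/2) * ((z.1 - p.re) * u.2 - (z.2 - p.im) * u.1) -
      d * ((z.1 - p.re) * u.1 + (z.2 - p.im) * u.2) * ((z.1 - p.re) ^ 2 + (z.2 - p.im) ^ 2)) * h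

/-- cutoff profile -/
def chi (a b s : ℝ) : ℝ := 1 - Real.smoothTransition ((s - a) / (b - a))

/-- its action -/
def Sx (a b s : ℝ) : ℝ := (s * chi a b s - ∫ t in b..s, chi a b t) / 2

lemma chi_smooth (a b : ℝ) : ContDiff ℝ (⊤ : ℕ∞) (chi a b) := by
  unfold chi
  exact contDiff_const.sub (Real.smoothTransition.contDiff.comp (by fun_prop))

lemma chi_one {a b s : ℝ} (hab : a < b) (h : s ≤ a) : chi a b s = 1 := by
  unfold chi
  rw [Real.smoothTransition.zero_of_nonpos, sub_zero]
  exact div_nonpos_of_nonpos_of_nonneg (by linarith) (by linarith)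

lemma chi_zero {a b s : ℝ} (hab : a < b) (h : b ≤ s) : chi a b s = 0 := by
  unfold chi
  rw [Real.smoothTransition.one_of_one_le, sub_self]
  rw [le_div_iff₀ (by linarith)]; linarith

lemma chi_nonneg (a b s : ℝ) : 0 ≤ chi a b s := by
  unfold chi; linarith [Real.smoothTransition.le_one ((s - a) / (b - a))]

lemma chi_le_one (a b s : ℝ) : chi a b s ≤ 1 := by
  unfold chi; linarith [Real.smoothTransition.nonneg ((s - a) / (b - a))]

lemma chi_anti {a b : ℝ} (hab : a < b) : Antitone (chi a b) := by
  intro s t h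
  unfold chi
  have := Real.smoothTransition.monotone (show (s - a) / (b - a) ≤ (t - a) / (b - a) by
    apply div_le_div_of_nonneg_right <;> linarith)
  linarith

lemma Sx_hasDerivAt (a b s : ℝ) : HasDerivAt (Sx a b) (s * deriv (chi a b) s / 2) s := by
  have hc := (chi_smooth a b).continuous
  have h1 : HasDerivAt (chi a b) (deriv (chi a b) s) s :=
    (((chi_smooth a b).differentiable (by simp)) s).hasDerivAt
  have h2 : HasDerivAt (fun u => ∫ t in b..u, chi a b t) (chi a b s) s :=
    intervalIntegral.integral_hasDerivAt_right (hc.intervalIntegrable _ _)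
      hc.aestronglyMeasurable.stronglyMeasurableAtFilter hc.continuousAt
  have := (((hasDerivAt_id s).mul h1).sub h2).div_const 2
  refine this.congr_deriv ?_
  simp

lemma Sx_deriv (a b s : ℝ) : deriv (Sx a b) s = s * deriv (chi a b) s / 2 :=
  (Sx_hasDerivAt a b s).deriv

lemma Sx_smooth (a b : ℝ) : ContDiff ℝ (⊤ : ℕ∞) (Sx a b) := by
  rw [contDiff_infty_iff_deriv]
  refine ⟨fun s => (Sx_hasDerivAt a b s).differentiableAt, ?_⟩
  have e : deriv (Sx a b) = fun s => s * deriv (chi a b) s / 2 := by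
    ext s; exact Sx_deriv a b s
  rw [e]
  have := (contDiff_infty_iff_deriv.1 (chi_smooth a b)).2
  fun_prop

lemma Sx_zero {a b s : ℝ} (hab : a < b) (h : b ≤ s) : Sx a b s = 0 := by
  unfold Sx
  rw [chi_zero hab h]
  have : ∫ t in b..s, chi a b t = ∫ t in b..s, (0:ℝ) := by
    apply intervalIntegral.integral_congr
    intro t ht
    rw [Set.uIcc_of_le h] at ht
    exact chi_zero hab ht.1
  rw [this]; simp

lemma Sx_const {a b s : ℝ} (hab : a < b) (h : s ≤ a) : Sx a b s = Sx a b a := by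
  have hc := (chi_smooth a b).continuous
  unfold Sx
  rw [chi_one hab h, chi_one hab le_rfl]
  have e : ∫ t in a..s, chi a b t = ∫ t in a..s, (1:ℝ) := by
    apply intervalIntegral.integral_congr
    intro t ht
    rw [Set.uIcc_of_ge h] at ht
    exact chi_one hab ht.2
  have := intervalIntegral.integral_add_adjacent_intervals
    (hc.intervalIntegrable (μ := volume) b a) (hc.intervalIntegrable a s)
  rw [← this, e]; simp; ring

lemma Sx_top {a b : ℝ} (hab : a < b) : a / 2 ≤ Sx a b a ∧ Sx a b a ≤ b / 2 := by
  have hc := (chi_smooth a b).continuous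
  unfold Sx
  rw [chi_one hab le_rfl, intervalIntegral.integral_symm]
  have h0 : 0 ≤ ∫ t in a..b, chi a b t :=
    intervalIntegral.integral_nonneg hab.le fun t _ => chi_nonneg a b t
  have h1 : ∫ t in a..b, chi a b t ≤ ∫ t in a..b, (1:ℝ) :=
    intervalIntegral.integral_mono_on hab.le (hc.intervalIntegrable _ _) (by simp)
      fun t _ => chi_le_one a b t
  simp at h1
  constructor <;> linarith

lemma Sx_anti {a b : ℝ} (ha : 0 < a) (hab : a < b) : Antitone (Sx a b) := by
  apply antitone_of_deriv_nonpos (fun s => (Sx_hasDerivAt a b s).differentiableAt)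
  intro s
  by_cases hs : s < a
  · have : Sx a b =ᶠ[nhds s] fun _ => Sx a b a := by
      filter_upwards [Iio_mem_nhds hs] with t ht using Sx_const hab (le_of_lt ht)
    rw [this.deriv_eq]; simp
  · rw [Sx_deriv]
    have := (chi_anti hab).deriv_nonpos (x := s)
    nlinarith

lemma Sx_nonneg {a b : ℝ} (ha : 0 < a) (hab : a < b) (s : ℝ) : 0 ≤ Sx a b s := by
  rcases le_total b s with h | h
  · rw [Sx_zero hab h]
  · rw [← Sx_zero hab le_rfl]; exact Sx_anti ha hab h

lemma Sx_le {a b : ℝ} (ha : 0 < a) (hab : a < b) (s : ℝ) : Sx a b s ≤ Sx a b a := by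
  rcases le_total s a with h | h
  · rw [Sx_const hab h]
  · exact Sx_anti ha hab h

/-- the primitive root of unity -/
def zet (n : ℕ) : ℂ := Complex.exp (2 * Real.pi * Complex.I / n)

/-- the open sector -/
def sector (n : ℕ) (a : ℝ) : Set ℂ :=
  Complex.polarCoord.source ∩
    Complex.polarCoord ⁻¹' (Set.Ioo 0 (Real.sqrt a) ×ˢ Set.Ioo 0 (2 * Real.pi / n))

lemma zet_norm (n : ℕ) : ‖zet n‖ = 1 := by
  have : zet n = Complex.exp ((2 * Real.pi / n : ℝ) * Complex.I) := by
    unfold zet; congr 1; push_cast; ring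
  rw [this, Complex.norm_exp_ofReal_mul_I]

lemma sector_open (n : ℕ) (a : ℝ) : IsOpen (sector n a) :=
  Complex.polarCoord.isOpen_inter_preimage (isOpen_Ioo.prod isOpen_Ioo)

lemma sector_mem {n : ℕ} {a : ℝ} {z : ℂ} (hz : z ∈ sector n a) :
    0 < ‖z‖ ∧ ‖z‖ < Real.sqrt a ∧ 0 < Complex.arg z ∧ Complex.arg z < 2 * Real.pi / n := by
  have := hz.2
  simp only [Set.mem_preimage, Complex.polarCoord_apply, Set.mem_prod, Set.mem_Ioo] at this
  tauto

lemma sector_disj {n : ℕ} (hn : 2 ≤ n) {a : ℝ} {z w : ℂ} (hz : z ∈ sector n a)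
    (hw : w ∈ sector n a) {j k : ℕ} (hj : j < n) (hk : k < n)
    (h : zet n ^ j * z = zet n ^ k * w) : j = k := by
  obtain ⟨z1, z2, z3, z4⟩ := sector_mem hz
  obtain ⟨w1, w2, w3, w4⟩ := sector_mem hw
  have hnorm : ‖z‖ = ‖w‖ := by
    have := congrArg norm h
    simpa [zet_norm] using this
  have hn0 : (0:ℝ) < n := by positivity
  rw [← Complex.norm_mul_exp_arg_mul_I z, ← Complex.norm_mul_exp_arg_mul_I w, hnorm] at h
  have hne : (‖w‖ : ℂ) ≠ 0 := by exact_mod_cast w1.ne'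
  have h2 : Complex.exp (j * (2 * Real.pi * Complex.I / n) + Complex.arg z * Complex.I) =
      Complex.exp (k * (2 * Real.pi * Complex.I / n) + Complex.arg w * Complex.I) := by
    rw [Complex.exp_add, Complex.exp_add, Complex.exp_nat_mul, Complex.exp_nat_mul]
    apply mul_left_cancel₀ hne
    unfold zet at h
    linear_combination h
  rw [Complex.exp_eq_exp_iff_exists_int] at h2
  obtain ⟨m, hm⟩ := h2
  have h3 : (j:ℝ) * (2 * Real.pi / n) + Complex.arg z =
      k * (2 * Real.pi / n) + Complex.arg w + m * (2 * Real.pi) := by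
    have := congrArg Complex.im hm
    have e1 : (j * (2 * Real.pi * Complex.I / n) + Complex.arg z * Complex.I : ℂ) =
      ((j:ℝ) * (2 * Real.pi / n) + Complex.arg z : ℝ) * Complex.I := by push_cast; ring
    have e2 : (k * (2 * Real.pi * Complex.I / n) + Complex.arg w * Complex.I +
        m * (2 * Real.pi * Complex.I) : ℂ) =
      ((k:ℝ) * (2 * Real.pi / n) + Complex.arg w + m * (2 * Real.pi) : ℝ) * Complex.I := by
      push_cast; ring
    rw [e1, e2, Complex.im_ofReal_mul, Complex.im_ofReal_mul] at this
    simpa using this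
  have hpn : 0 < 2 * Real.pi / n := by positivity
  set δ := 2 * Real.pi / n with hδ
  have h4 : 2 * Real.pi = n * δ := by rw [hδ]; field_simp
  rw [h4] at h3
  have h5 : ((j - k - m * n : ℤ) : ℝ) * δ = Complex.arg w - Complex.arg z := by
    push_cast; linear_combination h3
  have h6 : ((j - k - m * n : ℤ) : ℝ) < 1 := by
    by_contra hc
    push Not at hc
    nlinarith
  have h7 : (-1 : ℝ) < ((j - k - m * n : ℤ) : ℝ) := by
    by_contra hc
    push Not at hc
    nlinarith
  have h8 : (j - k - m * n : ℤ) < 1 := by exact_mod_cast h6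
  have h9 : (-1 : ℤ) < (j - k - m * n : ℤ) := by exact_mod_cast h7
  have h10 : (j - k : ℤ) = m * n := by omega
  have hm0 : m = 0 := by
    have : m < 1 := by
      by_contra hc
      push Not at hc
      have : (n:ℤ) ≤ m * n := by nlinarith
      omega
    have : -1 < m := by
      by_contra hc
      push Not at hc
      have : m * n ≤ -(n:ℤ) := by nlinarith
      omega
    omega
  rw [hm0] at h10
  omega

lemma sector_volume (n : ℕ) (hn : 2 ≤ n) (a : ℝ) (ha : 0 < a) :
    volume (sector n a) = ENNReal.ofReal (Real.pi * a / n) := by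
  have hn0 : (0:ℝ) < n := by positivity
  have hpn : 2 * Real.pi / n ≤ Real.pi := by
    rw [div_le_iff₀ hn0]
    have : (2:ℝ) ≤ n := by exact_mod_cast hn
    nlinarith [Real.pi_pos]
  have hm := (sector_open n a).measurableSet
  rw [← lintegral_indicator_one hm, ← Complex.lintegral_comp_polarCoord_symm]
  have hmt : MeasurableSet polarCoord.target := polarCoord.open_target.measurableSet
  have hmr : MeasurableSet (Set.Ioo 0 (Real.sqrt a) ×ˢ Set.Ioo 0 (2 * Real.pi / n)) :=
    measurableSet_Ioo.prod measurableSet_Ioo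
  have hsub : Set.Ioo 0 (Real.sqrt a) ×ˢ Set.Ioo 0 (2 * Real.pi / n) ⊆ polarCoord.target := by
    rw [polarCoord_target]
    rintro ⟨x, y⟩ ⟨hx, hy⟩
    simp at hx hy ⊢
    have := Real.pi_pos
    refine ⟨hx.1, by linarith, by linarith⟩
  have e : ∫⁻ p in polarCoord.target, ENNReal.ofReal p.1 •
      (sector n a).indicator 1 (Complex.polarCoord.symm p) =
      ∫⁻ p in polarCoord.target, (Set.Ioo 0 (Real.sqrt a) ×ˢ Set.Ioo 0 (2 * Real.pi / n)).indicator
        (fun p => ENNReal.ofReal p.1) p := by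
    apply setLIntegral_congr_fun hmt
    intro p hp
    have hp' : p ∈ Complex.polarCoord.target := hp
    have key : Complex.polarCoord.symm p ∈ sector n a ↔
        p ∈ Set.Ioo 0 (Real.sqrt a) ×ˢ Set.Ioo 0 (2 * Real.pi / n) := by
      unfold sector
      rw [Set.mem_inter_iff, Set.mem_preimage, Complex.polarCoord.right_inv hp']
      simp only [Complex.polarCoord.map_target hp', true_and]
    by_cases h : p ∈ Set.Ioo 0 (Real.sqrt a) ×ˢ Set.Ioo 0 (2 * Real.pi / n)
    · simp only [Set.indicator_of_mem h, Set.indicator_of_mem (key.2 h)]; simp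
    · simp only [Set.indicator_of_notMem h, Set.indicator_of_notMem (fun hh => h (key.1 hh))]; simp
  rw [e, setLIntegral_indicator hmr, Set.inter_eq_left.2 hsub, Measure.volume_eq_prod,
    ← Measure.prod_restrict, lintegral_prod _ (by fun_prop)]
  simp only [lintegral_const, Measure.restrict_apply MeasurableSet.univ, Set.univ_inter,
    Real.volume_Ioo, sub_zero]
  rw [lintegral_mul_const _ (by fun_prop), ← ofReal_integral_eq_lintegral_ofReal]
  · rw [← integral_Ioc_eq_integral_Ioo, ← intervalIntegral.integral_of_le (Real.sqrt_nonneg a),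
      ← ENNReal.ofReal_mul]
    · congr 1
      simp [Real.sq_sqrt ha.le]
      ring
    · simp; positivity
  · exact (continuous_id.integrableOn_Icc).mono_set Set.Ioo_subset_Icc_self
  · filter_upwards [ae_restrict_mem measurableSet_Ioo] with x hx using hx.1.le

lemma ball_volume (c : ℂ) (r : ℝ) (hr : 0 ≤ r) :
    volume (Metric.closedBall c r) = ENNReal.ofReal (Real.pi * r ^ 2) := by
  rw [Complex.volume_closedBall, mul_comm, ENNReal.ofReal_mul Real.pi_pos.le,
    ENNReal.ofReal_pow hr]
  congr 1
  rw [ENNReal.ofReal, ← NNReal.coe_real_pi, Real.toNNReal_coe]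

lemma geom0 (n : ℕ) (hn : 2 ≤ n) (a : ℝ) (ha : 0 < a) (η : ℝ) (hη : 0 < η) :
    ∃ (F : Finset ℂ) (r : ℂ → ℝ), (∀ f ∈ F, 0 < r f ∧ Metric.closedBall f (r f) ⊆ sector n a) ∧
      (∀ f ∈ F, ∀ f' ∈ F, ∀ z, z ∈ Metric.closedBall f (r f) → z ∈ Metric.closedBall f' (r f') →
        f = f') ∧
      Real.pi * a / n - η < ∑ f ∈ F, Real.pi * r f ^ 2 := by
  classical
  obtain ⟨t, r, htc, hts, hr, hcov, hd⟩ :=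
    Besicovitch.exists_disjoint_closedBall_covering_ae (volume : Measure ℂ)
      (fun x => {r | Metric.closedBall x r ⊆ sector n a}) (sector n a)
      (by
        intro x hx δ hδ
        obtain ⟨ε, hε, h⟩ := Metric.nhds_basis_closedBall.mem_iff.1 ((sector_open n a).mem_nhds hx)
        refine ⟨min ε (δ / 2), ?_, by positivity, ?_⟩
        · exact (Metric.closedBall_subset_closedBall (min_le_left _ _)).trans h
        · exact (min_le_right _ _).trans_lt (by linarith))
      (fun _ => 1) (fun _ _ => one_pos)
  have h1 : volume (sector n a) ≤ volume (⋃ x ∈ t, Metric.closedBall x (r x)) := by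
    rw [← ae_le_set] at hcov
    exact measure_mono_ae hcov
  rw [measure_biUnion htc hd (fun x _ => Metric.isClosed_closedBall.measurableSet),
    sector_volume n hn a ha] at h1
  have hn0 : (0:ℝ) < n := by positivity
  have h2 : ENNReal.ofReal (Real.pi * a / n - η) < ENNReal.ofReal (Real.pi * a / n) := by
    rw [ENNReal.ofReal_lt_ofReal_iff (by positivity)]; linarith
  have h3 := h2.trans_le h1
  rw [ENNReal.tsum_eq_iSup_sum, lt_iSup_iff] at h3
  obtain ⟨s, hs⟩ := h3
  refine ⟨s.image Subtype.val, r, ?_, ?_, ?_⟩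
  · intro f hf
    simp only [Finset.mem_image] at hf
    obtain ⟨x, _, rfl⟩ := hf
    exact ⟨(hr x x.2).2.1, (hr x x.2).1⟩
  · intro f hf f' hf' z hz hz'
    simp only [Finset.mem_image] at hf hf'
    obtain ⟨x, _, rfl⟩ := hf
    obtain ⟨y, _, rfl⟩ := hf'
    exact hd.elim x.2 y.2 (Set.not_disjoint_iff.2 ⟨z, hz, hz'⟩)
  · rw [Finset.sum_image (by intro x _ y _ h; exact Subtype.ext h)]
    have e : ∑ x ∈ s, volume (Metric.closedBall (x:ℂ) (r x)) =
        ENNReal.ofReal (∑ x ∈ s, Real.pi * r x ^ 2) := by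
      rw [ENNReal.ofReal_sum_of_nonneg (fun x _ => by positivity)]
      exact Finset.sum_congr rfl fun x _ => ball_volume _ _ (hr x x.2).2.1.le
    rw [e] at hs
    exact (ENNReal.ofReal_lt_ofReal_iff'.1 hs).1

lemma geom (n : ℕ) (hn : 2 ≤ n) (a : ℝ) (ha : 0 < a) (η : ℝ) (hη : 0 < η) :
    ∃ P : Finset (ℂ × ℝ), (∀ p ∈ P, 0 < p.2 ∧ p.1 ≠ 0 ∧
        (∀ z, ‖z - p.1‖ ≤ p.2 → ‖z‖ ^ 2 ≤ a) ∧ (zet n * p.1, p.2) ∈ P) ∧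
      (∀ p ∈ P, ∀ q ∈ P, ∀ z, ‖z - p.1‖ ≤ p.2 → ‖z - q.1‖ ≤ q.2 → p = q) ∧
      Real.pi * a - η ≤ ∑ p ∈ P, Real.pi * p.2 ^ 2 := by
  classical
  have hn0 : (0:ℝ) < n := by positivity
  obtain ⟨F, r, hF, hd, hsum⟩ := geom0 n hn a ha (η / n) (by positivity)
  have hz0 : zet n ≠ 0 := Complex.exp_ne_zero _
  have hzn : zet n ^ n = 1 := by
    unfold zet; exact (Complex.isPrimitiveRoot_exp n (by omega)).pow_eq_one
  have back : ∀ (f : ℂ) (k : ℕ) (z : ℂ), f ∈ F → ‖z - zet n ^ k * f‖ ≤ r f →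
      ∃ w, z = zet n ^ k * w ∧ w ∈ Metric.closedBall f (r f) := by
    intro f k z hf h
    refine ⟨z / zet n ^ k, by field_simp, ?_⟩
    rw [mem_closedBall_iff_norm]
    have : z - zet n ^ k * f = zet n ^ k * (z / zet n ^ k - f) := by field_simp
    rw [this, norm_mul, norm_pow, zet_norm, one_pow, one_mul] at h
    exact h
  have disj : ∀ f ∈ F, ∀ f' ∈ F, ∀ k < n, ∀ k' < n, ∀ z, ‖z - zet n ^ k * f‖ ≤ r f →
      ‖z - zet n ^ k' * f'‖ ≤ r f' → f = f' ∧ k = k' := by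
    intro f hf f' hf' k hk k' hk' z h h'
    obtain ⟨w, hw, hwb⟩ := back f k z hf h
    obtain ⟨w', hw', hwb'⟩ := back f' k' z hf' h'
    have hkk := sector_disj hn ((hF f hf).2 hwb) ((hF f' hf').2 hwb') hk hk' (hw.symm.trans hw')
    subst hkk
    have : w = w' := mul_left_cancel₀ (pow_ne_zero k hz0) (hw.symm.trans hw')
    subst this
    exact ⟨hd f hf f' hf' w hwb hwb', rfl⟩
  have hmem : ∀ p : ℂ × ℝ, p ∈ (F ×ˢ Finset.range n).image (fun q => (zet n ^ q.2 * q.1, r q.1)) ↔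
      ∃ f ∈ F, ∃ k < n, p = (zet n ^ k * f, r f) := by
    intro p
    simp only [Finset.mem_image, Finset.mem_product, Finset.mem_range, Prod.exists]
    constructor
    · rintro ⟨f, k, ⟨hf, hk⟩, rfl⟩; exact ⟨f, hf, k, hk, rfl⟩
    · rintro ⟨f, hf, k, hk, rfl⟩; exact ⟨f, k, ⟨hf, hk⟩, rfl⟩
  refine ⟨(F ×ˢ Finset.range n).image (fun q => (zet n ^ q.2 * q.1, r q.1)), ?_, ?_, ?_⟩
  · intro p hp
    rw [hmem] at hp
    obtain ⟨f, hf, k, hk, rfl⟩ := hp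
    have hfs : f ∈ sector n a := (hF f hf).2 (Metric.mem_closedBall_self (hF f hf).1.le)
    refine ⟨(hF f hf).1, ?_, ?_, ?_⟩
    · exact mul_ne_zero (pow_ne_zero _ hz0) (norm_pos_iff.1 (sector_mem hfs).1)
    · intro z hz
      obtain ⟨w, rfl, hw⟩ := back f k z hf hz
      rw [norm_mul, norm_pow, zet_norm, one_pow, one_mul]
      have := (sector_mem ((hF f hf).2 hw)).2.1
      exact (Real.le_sqrt (norm_nonneg _) ha.le).1 this.le
    · rw [hmem]
      by_cases h : k + 1 < n
      · exact ⟨f, hf, k + 1, h, by rw [pow_succ]; ext1; ring; rfl⟩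
      · refine ⟨f, hf, 0, by omega, ?_⟩
        have : k + 1 = n := by omega
        ext1
        · simp only
          rw [← mul_assoc, ← pow_succ', this, hzn]; simp
        · rfl
  · intro p hp q hq z hz hz'
    rw [hmem] at hp hq
    obtain ⟨f, hf, k, hk, rfl⟩ := hp
    obtain ⟨f', hf', k', hk', rfl⟩ := hq
    obtain ⟨rfl, rfl⟩ := disj f hf f' hf' k hk k' hk' z hz hz'
    rfl
  · rw [Finset.sum_image]
    · rw [Finset.sum_product]
      simp only [Finset.sum_const, Finset.card_range, nsmul_eq_mul]
      rw [← Finset.mul_sum]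
      have := mul_lt_mul_of_pos_left hsum hn0
      have e : (n:ℝ) * (Real.pi * a / n - η / n) = Real.pi * a - η := by field_simp
      linarith
    · rintro ⟨f, k⟩ h ⟨f', k'⟩ h' he
      simp only [Finset.coe_product, Finset.coe_range, Set.mem_prod, Finset.mem_coe, Set.mem_Iio]
        at h h'
      simp only [Prod.mk.injEq] at he
      obtain ⟨rfl, rfl⟩ := disj f h.1 f' h'.1 k h.2 k' h'.2 (zet n ^ k * f)
        (by simpa using (hF f h.1).1.le) (by rw [he.1]; simpa using (hF f' h'.1).1.le)
      rfl

/-- complex coordinate -/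
def cc (z : ℝ × ℝ) : ℂ := ⟨z.1, z.2⟩

lemma cc_inj {z w : ℝ × ℝ} (h : cc z = cc w) : z = w := by
  have h1 := congrArg Complex.re h
  have h2 := congrArg Complex.im h
  exact Prod.ext h1 h2

lemma sqd_eq (p : ℂ) (z : ℝ × ℝ) : sqd p z = ‖cc z - p‖ ^ 2 := by
  rw [Complex.sq_norm, Complex.normSq_apply]
  simp [sqd, cc]; ring

lemma cc_tw (p : ℂ) (g : ℝ → ℝ) (z : ℝ × ℝ) :
    cc (tw p g z) = p + Complex.exp (g (sqd p z) * Complex.I) * (cc z - p) := by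
  rw [Complex.exp_mul_I, ← Complex.ofReal_cos, ← Complex.ofReal_sin]
  apply Complex.ext
  · simp [cc, tw, -Complex.ofReal_cos, -Complex.ofReal_sin]
  · simp [cc, tw, -Complex.ofReal_cos, -Complex.ofReal_sin]; ring

lemma lambda0_primitive (U : ℝ × ℝ → ℝ) (hU : ContDiff ℝ (⊤ : ℕ∞) U) :
    IsPrimitive (fun z => lambda0 z + fderiv ℝ U z) := by
  have h0 : ContDiff ℝ (⊤ : ℕ∞) lambda0 := by unfold lambda0; fun_prop
  have h1 : ContDiff ℝ (⊤ : ℕ∞) (fderiv ℝ U) := hU.fderiv_right (by simp)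
  refine ⟨h0.add h1, fun z u v => ?_⟩
  have d1 : HasFDerivAt (fderiv ℝ U) _ z := ((h1.differentiable (by simp)) z).hasFDerivAt
  have hx : HasFDerivAt (fun z : ℝ × ℝ => z.1 / 2) ((1/2 : ℝ) • ContinuousLinearMap.fst ℝ ℝ ℝ) z := by
    have := (hasFDerivAt_fst (𝕜 := ℝ) (p := z)).const_mul (1/2 : ℝ)
    refine this.congr_of_eventuallyEq (Filter.Eventually.of_forall fun w => ?_)
    ring
  have hy : HasFDerivAt (fun z : ℝ × ℝ => z.2 / 2) ((1/2 : ℝ) • ContinuousLinearMap.snd ℝ ℝ ℝ) z := by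
    have := (hasFDerivAt_snd (𝕜 := ℝ) (p := z)).const_mul (1/2 : ℝ)
    refine this.congr_of_eventuallyEq (Filter.Eventually.of_forall fun w => ?_)
    ring
  have d0 := (hx.smul_const (ContinuousLinearMap.snd ℝ ℝ ℝ)).sub
    (hy.smul_const (ContinuousLinearMap.fst ℝ ℝ ℝ))
  have d : HasFDerivAt (fun z => lambda0 z + fderiv ℝ U z) _ z := d0.add d1
  have hsym : fderiv ℝ (fderiv ℝ U) z u v = fderiv ℝ (fderiv ℝ U) z v u :=
    ((contDiff_infty.1 hU 2).contDiffAt.isSymmSndFDerivAt (by simp)).eq u v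
  rw [d.fderiv]
  simp [omega0, hsym]
  ring

lemma psi_exists (G S : ℝ → ℝ → ℝ) (β : ℝ → ℝ) (hG : ∀ r, ContDiff ℝ (⊤ : ℕ∞) (G r))
    (hS : ∀ r, ContDiff ℝ (⊤ : ℕ∞) (S r)) (P : Finset (ℂ × ℝ))
    (hGb : ∀ p ∈ P, ∀ s, β p.2 ≤ s → G p.2 s = 0) (hSb : ∀ p ∈ P, ∀ s, β p.2 ≤ s → S p.2 s = 0)
    (hSd : ∀ r s, deriv (S r) s = s * deriv (G r) s / 2)
    (hd : ∀ p ∈ P, ∀ q ∈ P, ∀ z, sqd p.1 z ≤ β p.2 → sqd q.1 z ≤ β q.2 → p = q) :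
    ∃ (ψ : DiffC) (σ : ℝ × ℝ → ℝ), IsAction ψ.toFun lambda0 σ ∧
      (∀ p ∈ P, ∀ z, sqd p.1 z ≤ β p.2 → ψ.toFun z = tw p.1 (G p.2) z ∧
        σ z = S p.2 (sqd p.1 z) - (vv p.1 (tw p.1 (G p.2) z) - vv p.1 z)) ∧
      (∀ z, (∀ p ∈ P, β p.2 < sqd p.1 z) → ψ.toFun z = z ∧ σ z = 0) := by
  classical
  induction P using Finset.induction_on with
  | empty => exact ⟨DiffC.one, _, action_one _, by simp, fun z _ => ⟨rfl, rfl⟩⟩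
  | insert p P hp ih =>
    obtain ⟨ψ, σ, h1, h2, h3⟩ := ih (fun q hq => hGb q (Finset.mem_insert_of_mem hq))
      (fun q hq => hSb q (Finset.mem_insert_of_mem hq))
      (fun q hq q' hq' => hd q (Finset.mem_insert_of_mem hq) q' (Finset.mem_insert_of_mem hq'))
    have hpm := Finset.mem_insert_self p P
    have hgb := hGb p hpm
    have ha := tw_action p.1 (G p.2) (S p.2) (hG _) (β p.2) hgb (hS _) (hSb p hpm) (hSd _)
    refine ⟨_, _, action_comp _ _ _ _ _ ha h1, ?_, ?_⟩
    · intro q hq z hz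
      rw [Finset.mem_insert] at hq
      rcases hq with rfl | hq
      · obtain ⟨e1, e2⟩ := h3 z (by
          intro q' hq'
          by_contra hc
          push Not at hc
          have := hd q hpm q' (Finset.mem_insert_of_mem hq') z hz hc
          subst this; exact hp hq')
        simp only [DiffC.comp, Function.comp, e1, e2, add_zero]
        exact ⟨rfl, trivial⟩
      · obtain ⟨e1, e2⟩ := h2 q hq z hz
        have hz' : sqd q.1 (tw q.1 (G q.2) z) ≤ β q.2 := by rw [sqd_tw]; exact hz
        have hlt : β p.2 ≤ sqd p.1 (tw q.1 (G q.2) z) := by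
          by_contra hc
          push Not at hc
          have := hd p hpm q (Finset.mem_insert_of_mem hq) _ hc.le hz'
          subst this; exact hp hq
        have e3 := tw_eq_self p.1 (G p.2) _ (hgb _ hlt)
        simp only [DiffC.comp, Function.comp, e1, e2]
        refine ⟨e3, ?_⟩
        rw [e3, hSb p hpm _ hlt]; ring
    · intro z hz
      obtain ⟨e1, e2⟩ := h3 z (fun q hq => hz q (Finset.mem_insert_of_mem hq))
      have hlt := (hz p hpm).le
      have e3 := tw_eq_self p.1 (G p.2) _ (hgb _ hlt)
      simp only [DiffC.comp, Function.comp, e1, e2]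
      refine ⟨e3, ?_⟩
      rw [e3, hSb p hpm _ hlt]; ring

lemma vv_eq (p : ℂ) (z : ℝ × ℝ) : vv p z = -(1/2) * ((starRingEnd ℂ) p * cc z).im := by
  simp [vv, cc]; ring

/-- The potential. -/
lemma U_exists (n : ℕ) (hn : 2 ≤ n) (P : Finset (ℂ × ℝ)) (a q : ℝ) (hq : 0 < q) (hq1 : q < 1)
    (hP : ∀ p ∈ P, 0 < p.2 ∧ p.1 ≠ 0 ∧
        (∀ z, ‖z - p.1‖ ≤ p.2 → ‖z‖ ^ 2 ≤ a) ∧ (zet n * p.1, p.2) ∈ P)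
    (hd : ∀ p ∈ P, ∀ q ∈ P, ∀ z, ‖z - p.1‖ ≤ p.2 → ‖z - q.1‖ ≤ q.2 → p = q) :
    ∃ U : ℝ × ℝ → ℝ, ContDiff ℝ (⊤ : ℕ∞) U ∧ (∀ z, a < sqd 0 z → U z = 0) ∧
      (∀ p ∈ P, ∀ z, sqd p.1 z ≤ q * p.2 ^ 2 → U z = vv p.1 z) ∧
      (∀ z w, cc w = zet n * cc z → U w = U z) := by
  have hz0 : zet n ≠ 0 := Complex.exp_ne_zero _
  have hqq : ∀ p ∈ P, q * p.2 ^ 2 < p.2 ^ 2 := by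
    intro p hp
    have := (hP p hp).1
    nlinarith [sq_pos_of_pos this]
  have hin : ∀ p ∈ P, ∀ z, chi (q * p.2 ^ 2) (p.2 ^ 2) (sqd p.1 z) ≠ 0 → ‖cc z - p.1‖ ≤ p.2 := by
    intro p hp z h
    have : sqd p.1 z < p.2 ^ 2 := by
      by_contra hc
      exact h (chi_zero (hqq p hp) (not_lt.1 hc))
    rw [sqd_eq] at this
    exact (abs_le_of_sq_le_sq' this.le (hP p hp).1.le).2
  refine ⟨fun z => ∑ p ∈ P, chi (q * p.2 ^ 2) (p.2 ^ 2) (sqd p.1 z) * vv p.1 z, ?_, ?_, ?_, ?_⟩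
  · apply ContDiff.sum
    intro p _
    have hs : ContDiff ℝ (⊤ : ℕ∞) (sqd p.1) := by unfold sqd; fun_prop
    have hv : ContDiff ℝ (⊤ : ℕ∞) (vv p.1) := by unfold vv; fun_prop
    exact ((chi_smooth _ _).comp hs).mul hv
  · intro z hz
    apply Finset.sum_eq_zero
    intro p hp
    by_cases h : chi (q * p.2 ^ 2) (p.2 ^ 2) (sqd p.1 z) = 0
    · rw [h, zero_mul]
    · have := (hP p hp).2.2.1 _ (hin p hp z h)
      rw [sqd_eq, sub_zero] at hz
      linarith
  · intro p hp z hz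
    beta_reduce
    rw [Finset.sum_eq_single_of_mem p hp]
    · rw [chi_one (hqq p hp) hz, one_mul]
    · intro p' hp' hne
      by_cases h : chi (q * p'.2 ^ 2) (p'.2 ^ 2) (sqd p'.1 z) = 0
      · rw [h, zero_mul]
      · refine absurd (hd p' hp' p hp _ (hin p' hp' z h) (hin p hp z ?_)) hne
        rw [chi_one (hqq p hp) hz]; exact one_ne_zero
  · intro z w hw
    symm
    have hinj : Set.InjOn (fun p : ℂ × ℝ => (zet n * p.1, p.2)) (P : Set (ℂ × ℝ)) := by
      rintro ⟨x, r⟩ _ ⟨y, s⟩ _ h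
      simp only [Prod.mk.injEq, mul_right_inj' hz0] at h
      exact Prod.ext h.1 h.2
    have hmaps : Set.MapsTo (fun p : ℂ × ℝ => (zet n * p.1, p.2)) (P : Set (ℂ × ℝ)) P :=
      fun p hp => (hP p hp).2.2.2
    refine Finset.sum_nbij (fun p : ℂ × ℝ => (zet n * p.1, p.2)) hmaps hinj
      (Finset.surjOn_of_injOn_of_card_le _ hmaps hinj le_rfl) ?_
    intro p hp
    have e1 : sqd (zet n * p.1) w = sqd p.1 z := by
      rw [sqd_eq, sqd_eq, hw, ← mul_sub, norm_mul, zet_norm, one_mul]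
    have e2 : vv (zet n * p.1) w = vv p.1 z := by
      rw [vv_eq, vv_eq, hw, map_mul]
      have : (starRingEnd ℂ) (zet n) * zet n = 1 := by
        rw [mul_comm, Complex.mul_conj, Complex.normSq_eq_norm_sq, zet_norm]; simp
      have e : (starRingEnd ℂ) (zet n) * (starRingEnd ℂ) p.1 * (zet n * cc z) =
        (starRingEnd ℂ) p.1 * cc z := by linear_combination (starRingEnd ℂ) p.1 * cc z * this
      rw [e]
    simp only [e1, e2]

/-- action profile of the small twists -/
def SP (m q q' r s : ℝ) : ℝ :=
  -(m / Sx (q * r ^ 2) (q' * r ^ 2) (q * r ^ 2)) * Sx (q * r ^ 2) (q' * r ^ 2) s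

/-- angle profile of the small twists -/
def GP (m q q' r s : ℝ) : ℝ :=
  -(m / Sx (q * r ^ 2) (q' * r ^ 2) (q * r ^ 2)) * chi (q * r ^ 2) (q' * r ^ 2) s

/-- angle profile of the big rotation -/
def G0 (n : ℕ) (a b s : ℝ) : ℝ := (2 * Real.pi / n) * chi a b s

/-- action profile of the big rotation -/
def S0 (n : ℕ) (a b s : ℝ) : ℝ := (2 * Real.pi / n) * Sx a b s

lemma rot_eq (n : ℕ) {a b : ℝ} (hab : a < b) (z : ℝ × ℝ) (h : sqd 0 z ≤ a) :
    cc (tw 0 (G0 n a b) z) = zet n * cc z := by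
  rw [cc_tw]
  simp only [G0, chi_one hab h, zet]
  rw [zero_add, sub_zero]
  congr 2
  push_cast; ring

lemma dyn (n : ℕ) (hn : 2 ≤ n) (P : Finset (ℂ × ℝ)) (a b q q' m : ℝ) (ha : 0 < a) (hab : a < b)
    (hb : b < 1) (hq : 0 < q) (hqq : q < q') (hq1 : q' < 1)
    (hP : ∀ p ∈ P, 0 < p.2 ∧ p.1 ≠ 0 ∧
        (∀ z, ‖z - p.1‖ ≤ p.2 → ‖z‖ ^ 2 ≤ a) ∧ (zet n * p.1, p.2) ∈ P)
    (hd : ∀ p ∈ P, ∀ q ∈ P, ∀ z, ‖z - p.1‖ ≤ p.2 → ‖z - q.1‖ ≤ q.2 → p = q) :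
    ∃ (l : OneForm) (φ : DiffC) (σ : ℝ × ℝ → ℝ),
      IsPrimitive l ∧
      (∀ z, a < sqd 0 z → l z = lambda0 z) ∧
      (∀ z, b ≤ sqd 0 z → φ.toFun z = z) ∧
      IsAction φ.toFun l σ ∧
      (∀ p ∈ P, ∀ z, sqd p.1 z ≤ q' * p.2 ^ 2 → sqd (zet n * p.1) (φ.toFun z) = sqd p.1 z ∧
        σ z = S0 n a b a + SP m q q' p.2 (sqd p.1 z)) ∧
      (∀ z, (∀ p ∈ P, q' * p.2 ^ 2 < sqd p.1 z) → φ.toFun z = tw 0 (G0 n a b) z ∧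
        σ z = S0 n a b (sqd 0 z) ∧ ∀ p ∈ P, q' * p.2 ^ 2 < sqd p.1 (φ.toFun z)) := by
  have hz0 : zet n ≠ 0 := Complex.exp_ne_zero _
  have hzn : zet n ^ n = 1 := by
    unfold zet; exact (Complex.isPrimitiveRoot_exp n (by omega)).pow_eq_one
  have hq'0 : 0 < q' := hq.trans hqq
  have hlt : ∀ p ∈ P, q * p.2 ^ 2 < q' * p.2 ^ 2 := by
    intro p hp
    have := sq_pos_of_pos (hP p hp).1
    nlinarith
  have hin : ∀ p ∈ P, ∀ z, sqd p.1 z ≤ q' * p.2 ^ 2 → ‖cc z - p.1‖ ≤ p.2 := by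
    intro p hp z h
    have := sq_pos_of_pos (hP p hp).1
    rw [sqd_eq] at h
    have h2 : ‖cc z - p.1‖ ^ 2 ≤ p.2 ^ 2 := by nlinarith
    exact (abs_le_of_sq_le_sq' h2 (hP p hp).1.le).2
  have hina : ∀ p ∈ P, ∀ z, sqd p.1 z ≤ q' * p.2 ^ 2 → sqd 0 z ≤ a := by
    intro p hp z h
    rw [sqd_eq, sub_zero]
    exact (hP p hp).2.2.1 _ (hin p hp z h)
  have hpow : ∀ (k : ℕ) (p : ℂ × ℝ), p ∈ P → (zet n ^ k * p.1, p.2) ∈ P := by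
    intro k
    induction k with
    | zero => intro p hp; simpa using hp
    | succ k ih =>
      intro p hp
      have := (hP _ (ih p hp)).2.2.2
      simp only at this
      rw [← mul_assoc, ← pow_succ'] at this
      exact this
  obtain ⟨U, hU, hU0, hUv, hUz⟩ := U_exists n hn P a q' hq'0 hq1 hP hd
  obtain ⟨ψ, τ, hψ, hψ1, hψ2⟩ := psi_exists (GP m q q') (SP m q q') (fun r => q' * r ^ 2)
    (fun r => contDiff_const.mul (chi_smooth _ _)) (fun r => contDiff_const.mul (Sx_smooth _ _)) P
    (fun p hp s hs => by
      show _ * chi _ _ s = 0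
      rw [chi_zero (hlt p hp) hs, mul_zero])
    (fun p hp s hs => by
      show _ * Sx _ _ s = 0
      rw [Sx_zero (hlt p hp) hs, mul_zero])
    (fun r s => by
      unfold SP GP
      rw [deriv_const_mul_field, deriv_const_mul_field, Sx_deriv]; ring)
    (fun p hp p' hp' z hz hz' => hd p hp p' hp' _ (hin p hp z hz) (hin p' hp' z hz'))
  have hG0b : ∀ s, b ≤ s → G0 n a b s = 0 := fun s hs => by
    unfold G0; rw [chi_zero hab hs, mul_zero]
  have hR := tw_action 0 (G0 n a b) (S0 n a b) (contDiff_const.mul (chi_smooth _ _)) b hG0b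
    (contDiff_const.mul (Sx_smooth _ _)) (fun s hs => by
      unfold S0; rw [Sx_zero hab hs, mul_zero])
    (fun s => by
      unfold S0 G0
      rw [deriv_const_mul_field, deriv_const_mul_field, Sx_deriv]; ring)
  have hvv0 : ∀ z, vv 0 z = 0 := by intro z; simp [vv]
  simp only [hvv0, sub_zero] at hR
  have hUc : HasCompactSupport U :=
    HasCompactSupport.intro (sqd_compact 0 a) fun z hz => hU0 z (not_le.1 hz)
  have hUR : ∀ z, U (tw 0 (G0 n a b) z) = U z := by
    intro z
    rcases le_or_gt (sqd 0 z) a with h | h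
    · exact hUz _ _ (rot_eq n hab z h)
    · rw [hU0 z h, hU0]; rw [sqd_tw]; exact h
  refine ⟨_, _, _, lambda0_primitive U hU, ?_, ?_,
    action_add _ _ _ U (action_comp _ _ _ _ _ hR hψ) hU hUc, ?_, ?_⟩
  · intro z hz
    have : U =ᶠ[nhds z] fun _ => 0 := by
      have ho : IsOpen {z | a < sqd 0 z} := isOpen_lt continuous_const (by unfold sqd; fun_prop)
      filter_upwards [ho.mem_nhds hz] with w hw using hU0 w hw
    rw [this.fderiv_eq]; simp
  · intro z hz
    have h1 := (hψ2 z (fun p hp => by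
      by_contra hc
      have := hina p hp z (not_lt.1 hc)
      linarith)).1
    simp only [DiffC.comp, Function.comp, h1]
    exact tw_eq_self _ _ _ (hG0b _ hz)
  · intro p hp z hz
    obtain ⟨e1, e2⟩ := hψ1 p hp z hz
    have e3 : sqd p.1 (ψ.toFun z) = sqd p.1 z := by rw [e1, sqd_tw]
    have hz2 : sqd p.1 (ψ.toFun z) ≤ q' * p.2 ^ 2 := by rw [e3]; exact hz
    have e4 := hina p hp _ hz2
    have e5 := rot_eq n hab _ e4
    simp only [DiffC.comp, Function.comp, twD]
    refine ⟨?_, ?_⟩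
    · rw [← e3, sqd_eq, sqd_eq, e5, ← mul_sub, norm_mul, zet_norm, one_mul]
    · rw [hUR, hUv p hp _ hz2, hUv p hp z hz, e2, e1]
      rw [e1] at e4
      have : S0 n a b (sqd 0 (tw p.1 (GP m q q' p.2) z)) = S0 n a b a := by
        unfold S0; rw [Sx_const hab e4]
      rw [this]; ring
  · intro z hz
    obtain ⟨e1, e2⟩ := hψ2 z hz
    simp only [DiffC.comp, Function.comp, twD, e1, e2, hUR]
    refine ⟨trivial, by ring, ?_⟩
    intro p hp
    by_contra hc
    push Not at hc
    have h1 := hina p hp _ hc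
    rw [sqd_tw] at h1
    have h2 := rot_eq n hab z h1
    have h3 := hz _ (hpow (n - 1) p hp)
    have h4 : sqd (zet n ^ (n - 1) * p.1) z = sqd p.1 (tw 0 (G0 n a b) z) := by
      rw [sqd_eq, sqd_eq, h2]
      have : zet n * cc z - p.1 = zet n * (cc z - zet n ^ (n - 1) * p.1) := by
        rw [mul_sub, ← mul_assoc, ← pow_succ', Nat.sub_add_cancel (by omega), hzn, one_mul]
      rw [this, norm_mul, zet_norm, one_mul]
    simp only [h4] at h3
    linarith

lemma zetpow_mem (n : ℕ) (P : Finset (ℂ × ℝ)) (hP : ∀ p ∈ P, (zet n * p.1, p.2) ∈ P) (k : ℕ)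
    (p : ℂ × ℝ) (hp : p ∈ P) : (zet n ^ k * p.1, p.2) ∈ P := by
  induction k with
  | zero => simpa using hp
  | succ k ih =>
    have := hP _ ih
    simp only at this
    rw [← mul_assoc, ← pow_succ'] at this
    exact this

lemma disc_volume (c : ℂ) (s : ℝ) (hs : 0 ≤ s) :
    volume {z : ℝ × ℝ | sqd c z ≤ s} = ENNReal.ofReal (Real.pi * s) := by
  have h := Complex.volume_preserving_equiv_real_prod.symm.measure_preimage
    (s := Metric.closedBall c (Real.sqrt s))
    Metric.isClosed_closedBall.measurableSet.nullMeasurableSet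
  rw [ball_volume c _ (Real.sqrt_nonneg s), Real.sq_sqrt hs] at h
  rw [← h]
  congr 1
  ext z
  have e : Complex.measurableEquivRealProd.symm z = cc z := rfl
  rw [Set.mem_preimage, e, mem_closedBall_iff_norm]
  simp only [Set.mem_ofPred_eq, sqd_eq]
  rw [Real.le_sqrt (norm_nonneg _) hs]

lemma disc_meas (c : ℂ) (s : ℝ) : MeasurableSet {z : ℝ × ℝ | sqd c z ≤ s} :=
  (isClosed_le (by unfold sqd; fun_prop) continuous_const).measurableSet

lemma disc_real (c : ℂ) (s : ℝ) (hs : 0 ≤ s) :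
    volume.real {z : ℝ × ℝ | sqd c z ≤ s} = Real.pi * s := by
  rw [Measure.real, disc_volume c s hs, ENNReal.toReal_ofReal (by positivity)]

lemma SP_bounds {m q q' r : ℝ} (hm : 0 ≤ m) (hq : 0 < q) (hqq : q < q') (hr : 0 < r) (s : ℝ) :
    -m ≤ SP m q q' r s ∧ SP m q q' r s ≤ 0 ∧ (s ≤ q * r ^ 2 → SP m q q' r s = -m) := by
  have hr2 : 0 < r ^ 2 := by positivity
  have h1 : 0 < q * r ^ 2 := by positivity
  have h2 : q * r ^ 2 < q' * r ^ 2 := by nlinarith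
  have h3 := (Sx_top h2).1
  have h4 : 0 < Sx (q * r ^ 2) (q' * r ^ 2) (q * r ^ 2) := by linarith
  have h5 := Sx_nonneg h1 h2 s
  have h6 := Sx_le h1 h2 s
  have h7 : 0 ≤ m / Sx (q * r ^ 2) (q' * r ^ 2) (q * r ^ 2) := by positivity
  have h8 : m / Sx (q * r ^ 2) (q' * r ^ 2) (q * r ^ 2) * Sx (q * r ^ 2) (q' * r ^ 2) (q * r ^ 2)
    = m := div_mul_cancel₀ _ h4.ne'
  unfold SP
  refine ⟨?_, ?_, ?_⟩
  · nlinarith [mul_le_mul_of_nonneg_left h6 h7]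
  · nlinarith [mul_nonneg h7 h5]
  · intro hs
    rw [Sx_const h2 hs]; linarith

set_option maxHeartbeats 1000000 in
/-- Proposition 2.6 (parts (i), (ii), (iv), (v)): for every `n ≥ 2` and `ε > 0` there are
a primitive `λ` of `ω₀` with `λ − λ₀` supported in a compact subset of the open unit
disk, and `φ ∈ Diff_c(𝔻,ω₀)` with action `σ_{φ,λ}` such that:
(i) `−π + π/n < σ_{φ,λ} < π/n` everywhere and `σ_{φ,λ} ≥ 0` at fixed points of `φ`;
(ii) `−π²(1−1/n) < CAL(φ) < −π²(1−1/n) + ε`;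
(iii) `σ_{φ,λ} ∘ φ = σ_{φ,λ}`;
(iv) periodic points of `φ` that are not fixed points have period at least `n`. -/
theorem statement19 (n : ℕ) (hn : 2 ≤ n) (ε : ℝ) (hε : 0 < ε) :
    ∃ (l : OneForm) (φ : DiffC) (σ : ℝ × ℝ → ℝ),
      IsPrimitive l ∧
      (∃ K : Set (ℝ × ℝ), IsCompact K ∧ K ⊆ openDisk ∧ ∀ z ∉ K, l z = lambda0 z) ∧
      (∃ K : Set (ℝ × ℝ), IsCompact K ∧ K ⊆ openDisk ∧ ∀ z ∉ K, φ.toFun z = z) ∧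
      IsAction φ.toFun l σ ∧
      (∀ z, -Real.pi + Real.pi / n < σ z ∧ σ z < Real.pi / n) ∧
      (∀ z₀, φ.toFun z₀ = z₀ → 0 ≤ σ z₀) ∧
      (-Real.pi ^ 2 * (1 - 1 / n) < ∫ z : ℝ × ℝ, σ z ∧
        (∫ z : ℝ × ℝ, σ z) < -Real.pi ^ 2 * (1 - 1 / n) + ε) ∧
      (∀ z, σ (φ.toFun z) = σ z) ∧
      (∀ k : ℕ, 0 < k → ∀ z₀, φ.toFun^[k] z₀ = z₀ → φ.toFun z₀ ≠ z₀ → n ≤ k) := by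
  classical
  have hpi := Real.pi_pos
  have hpi3 := Real.pi_gt_three
  have hpi4 : Real.pi < 3.15 := Real.pi_lt_d2
  have hn2 : (2:ℝ) ≤ n := by exact_mod_cast hn
  have hn0 : (0:ℝ) < n := by linarith
  obtain ⟨η, hη0, hη1, hηε⟩ : ∃ η : ℝ, 0 < η ∧ η ≤ 1 ∧ 7 * η ≤ ε :=
    ⟨min 1 (ε / 7), by positivity, min_le_left _ _, by
      have := min_le_right 1 (ε / 7); linarith⟩
  obtain ⟨δ, hδ⟩ : ∃ δ : ℝ, δ = η / 8 := ⟨_, rfl⟩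
  have hδ0 : 0 < δ := by rw [hδ]; positivity
  have hδ1 : δ ≤ 1 / 8 := by rw [hδ]; linarith
  obtain ⟨a, hae⟩ : ∃ a : ℝ, a = 1 - δ := ⟨_, rfl⟩
  obtain ⟨b, hbe⟩ : ∃ b : ℝ, b = 1 - δ / 2 := ⟨_, rfl⟩
  have ha : 0 < a := by linarith
  have hb0 : 0 < b := by linarith
  have hab : a < b := by linarith
  have hb : b < 1 := by linarith
  obtain ⟨P, hP, hd, hsum⟩ := geom n hn a ha δ hδ0
  -- constants
  set w := Real.pi / n with hw
  have hw0 : 0 < w := by positivity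
  have hw2 : w ≤ Real.pi / 2 := by
    rw [hw, div_le_div_iff₀ hn0 two_pos]; nlinarith
  have htop := Sx_top hab
  set c0 := S0 n a b a with hc0
  have hc0e : c0 = 2 * w * Sx a b a := by rw [hc0, S0, hw]; ring
  have hc0w : c0 < w := by rw [hc0e]; nlinarith
  have hc00 : 0 ≤ c0 := by rw [hc0e]; have : 0 ≤ Sx a b a := by linarith
                           positivity
  obtain ⟨m, hme⟩ : ∃ m : ℝ, m = Real.pi - w + c0 - η := ⟨_, rfl⟩
  have hm : 0 ≤ m := by linarith
  have hS0 : ∀ s, 0 ≤ S0 n a b s ∧ S0 n a b s ≤ c0 := by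
    intro s
    have h1 := Sx_nonneg ha hab s
    have h2 := Sx_le ha hab s
    rw [hc0]
    unfold S0
    refine ⟨by positivity, ?_⟩
    exact mul_le_mul_of_nonneg_left h2 (by positivity)
  obtain ⟨l, φ, σ, hl, hlK, hφK, hσ, hin, hout⟩ := dyn n hn P a b a b m ha hab hb ha hab hb hP hd
  have hP' : ∀ p ∈ P, (zet n * p.1, p.2) ∈ P := fun p hp => (hP p hp).2.2.2
  have hz0 : zet n ≠ 0 := Complex.exp_ne_zero _
  have hprim : IsPrimitiveRoot (zet n) n := Complex.isPrimitiveRoot_exp n (by omega)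
  have hball : ∀ p ∈ P, ∀ z, sqd p.1 z ≤ b * p.2 ^ 2 → ‖cc z - p.1‖ ≤ p.2 := by
    intro p hp z h
    have := sq_pos_of_pos (hP p hp).1
    rw [sqd_eq] at h
    have h2 : ‖cc z - p.1‖ ^ 2 ≤ p.2 ^ 2 := by nlinarith
    exact (abs_le_of_sq_le_sq' h2 (hP p hp).1.le).2
  have hcases : ∀ z, (∃ p ∈ P, sqd p.1 z ≤ b * p.2 ^ 2) ∨ (∀ p ∈ P, b * p.2 ^ 2 < sqd p.1 z) := by
    intro z
    by_cases h : ∃ p ∈ P, sqd p.1 z ≤ b * p.2 ^ 2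
    · exact Or.inl h
    · push Not at h; exact Or.inr h
  have hbd : ∀ z, c0 - m ≤ σ z ∧ σ z ≤ c0 := by
    intro z
    rcases hcases z with ⟨p, hp, hz⟩ | hz
    · have h1 := SP_bounds hm ha hab (hP p hp).1 (sqd p.1 z)
      rw [(hin p hp z hz).2]
      constructor <;> linarith
    · rw [(hout z hz).2.1]
      have := hS0 (sqd 0 z)
      constructor <;> linarith
  have hzero : ∀ z, b < sqd 0 z → σ z = 0 := by
    intro z hz
    rcases hcases z with ⟨p, hp, hz'⟩ | hz'
    · have := (hP p hp).2.2.1 _ (hball p hp z hz')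
      rw [sqd_eq, sub_zero] at hz
      linarith
    · rw [(hout z hz').2.1, S0, Sx_zero hab hz.le, mul_zero]
  -- iteration inside discs
  have hiter : ∀ (k : ℕ), ∀ p ∈ P, ∀ z, sqd p.1 z ≤ b * p.2 ^ 2 →
      sqd (zet n ^ k * p.1) (φ.toFun^[k] z) = sqd p.1 z := by
    intro k p hp z hz
    induction k with
    | zero => simp
    | succ k ih =>
      rw [Function.iterate_succ_apply']
      have := (hin _ (zetpow_mem n P hP' k p hp) (φ.toFun^[k] z) (by rw [ih]; exact hz)).1
      simp only at this
      rw [← mul_assoc, ← pow_succ'] at this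
      rw [this, ih]
  have hper : ∀ (k : ℕ), ∀ p ∈ P, ∀ z, sqd p.1 z ≤ b * p.2 ^ 2 → φ.toFun^[k] z = z → n ∣ k := by
    intro k p hp z hz hk
    have h1 := hiter k p hp z hz
    rw [hk] at h1
    have hm1 := zetpow_mem n P hP' k p hp
    have h2 := hd p hp _ hm1 (cc z) (hball p hp z hz) (hball _ hm1 z (by
      simp only; rw [h1]; exact hz))
    have h3 : p.1 = zet n ^ k * p.1 := congrArg Prod.fst h2
    have h4 : zet n ^ k = 1 := mul_right_cancel₀ (hP p hp).2.1 (by rw [one_mul]; exact h3.symm)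
    exact hprim.dvd_of_pow_eq_one _ h4
  have hiter2 : ∀ (k : ℕ) (z : ℝ × ℝ), (∀ p ∈ P, b * p.2 ^ 2 < sqd p.1 z) →
      (∀ p ∈ P, b * p.2 ^ 2 < sqd p.1 (φ.toFun^[k] z)) ∧ sqd 0 (φ.toFun^[k] z) = sqd 0 z ∧
      cc (φ.toFun^[k] z) = Complex.exp (G0 n a b (sqd 0 z) * Complex.I) ^ k * cc z := by
    intro k z hz
    induction k with
    | zero => exact ⟨by simpa using hz, by simp, by simp⟩
    | succ k ih =>
      obtain ⟨i1, i2, i3⟩ := ih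
      obtain ⟨o1, -, o3⟩ := hout _ i1
      rw [Function.iterate_succ_apply']
      refine ⟨o3, ?_, ?_⟩
      · rw [o1, sqd_tw, i2]
      · rw [o1, cc_tw, i2, sub_zero, zero_add, i3, pow_succ']; ring
  have hcore : ∀ p ∈ P, ∀ z, sqd p.1 z ≤ a * p.2 ^ 2 → σ z = c0 - m := by
    intro p hp z hz
    have := sq_pos_of_pos (hP p hp).1
    have hzb : sqd p.1 z ≤ b * p.2 ^ 2 := by nlinarith
    rw [(hin p hp z hzb).2, (SP_bounds hm ha hab (hP p hp).1 _).2.2 hz]; ring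
  have hsInt : Integrable σ := hσ.1.continuous.integrable_of_hasCompactSupport hσ.2.1
  -- the disc and the cores
  set D : Set (ℝ × ℝ) := {z | sqd 0 z ≤ 1} with hD
  have hDm : MeasurableSet D := disc_meas 0 1
  have hDv : volume.real D = Real.pi := by rw [hD, disc_real 0 1 zero_le_one, mul_one]
  have hDf : volume D ≠ ⊤ := by rw [hD, disc_volume 0 1 zero_le_one]; exact ENNReal.ofReal_ne_top
  set C : Set (ℝ × ℝ) := ⋃ p ∈ P, {z | sqd p.1 z ≤ a * p.2 ^ 2} with hC
  have hCm : MeasurableSet C := Finset.measurableSet_biUnion _ fun p _ => disc_meas _ _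
  have hcb : ∀ p ∈ P, ∀ z, sqd p.1 z ≤ a * p.2 ^ 2 → ‖cc z - p.1‖ ≤ p.2 := by
    intro p hp z hz
    have := sq_pos_of_pos (hP p hp).1
    exact hball p hp z (by nlinarith)
  have hCv : volume.real C = ∑ p ∈ P, Real.pi * (a * p.2 ^ 2) := by
    rw [hC, measureReal_biUnion_finset (h := fun p _ => by
      rw [disc_volume _ _ (by positivity)]; exact ENNReal.ofReal_ne_top)]
    · exact Finset.sum_congr rfl fun p hp => disc_real _ _ (by positivity)
    · intro p hp p' hp' hne
      rw [Function.onFun, Set.disjoint_left]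
      intro z hz hz'
      exact hne (hd p hp p' hp' _ (hcb p hp z hz) (hcb p' hp' z hz'))
    · intro p _; exact disc_meas _ _
  have hCD : C ⊆ D := by
    intro z hz
    simp only [hC, Set.mem_iUnion] at hz
    obtain ⟨p, hp, hz⟩ := hz
    have := (hP p hp).2.2.1 _ (hcb p hp z hz)
    show sqd 0 z ≤ 1
    rw [sqd_eq, sub_zero]; linarith
  have hCf : volume C ≠ ⊤ := measure_ne_top_of_subset hCD hDf
  have hCge : Real.pi - η ≤ volume.real C := by
    have e : ∑ p ∈ P, Real.pi * (a * p.2 ^ 2) = a * ∑ p ∈ P, Real.pi * p.2 ^ 2 := by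
      rw [Finset.mul_sum]; exact Finset.sum_congr rfl fun p _ => by ring
    rw [hCv, e]
    have h1 := mul_le_mul_of_nonneg_left hsum ha.le
    have h2 : Real.pi - η ≤ a * (Real.pi * a - δ) := by
      have : η = 8 * δ := by rw [hδ]; ring
      rw [this, hae]
      nlinarith [mul_pos hδ0 (sub_pos.2 hpi4), mul_pos hpi (mul_pos hδ0 hδ0), mul_pos hδ0 hδ0]
    linarith
  have hoffD : ∀ z, z ∉ D → σ z = 0 := by
    intro z hz
    have : ¬ sqd 0 z ≤ 1 := hz
    exact hzero z (by linarith)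
  have hlow : (c0 - m) * Real.pi ≤ ∫ z, σ z := by
    have e : ∫ z, D.indicator (fun _ => c0 - m) z = (c0 - m) * Real.pi := by
      rw [integral_indicator hDm, setIntegral_const, hDv, smul_eq_mul, mul_comm]
    rw [← e]
    refine integral_mono ((integrable_indicator_iff hDm).2 (integrableOn_const hDf)) hsInt ?_
    intro z
    by_cases hz : z ∈ D
    · simp only [Set.indicator_of_mem hz]; exact (hbd z).1
    · simp only [Set.indicator_of_notMem hz, hoffD z hz]; exact le_rfl
  have hup : (∫ z, σ z) ≤ w * Real.pi + (c0 - m - w) * volume.real C := by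
    have i1 : Integrable (D.indicator (fun _ : ℝ × ℝ => w)) :=
      (integrable_indicator_iff hDm).2 (integrableOn_const hDf)
    have i2 : Integrable (C.indicator (fun _ : ℝ × ℝ => c0 - m - w)) :=
      (integrable_indicator_iff hCm).2 (integrableOn_const hCf)
    have e : ∫ z, (D.indicator (fun _ => w) z + C.indicator (fun _ => c0 - m - w) z) =
        w * Real.pi + (c0 - m - w) * volume.real C := by
      rw [integral_add i1 i2, integral_indicator hDm, integral_indicator hCm, setIntegral_const,
        setIntegral_const, hDv, smul_eq_mul, smul_eq_mul, mul_comm, mul_comm (c0 - m - w)]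
    rw [← e]
    refine integral_mono hsInt (i1.add i2) ?_
    intro z
    by_cases hz : z ∈ C
    · simp only [Set.indicator_of_mem hz, Set.indicator_of_mem (hCD hz)]
      simp only [hC, Set.mem_iUnion] at hz
      obtain ⟨p, hp, hz⟩ := hz
      rw [hcore p hp z hz]; linarith
    · by_cases hz' : z ∈ D
      · simp only [Set.indicator_of_notMem hz, Set.indicator_of_mem hz']
        linarith [(hbd z).2]
      · simp only [Set.indicator_of_notMem hz, Set.indicator_of_notMem hz', hoffD z hz']
        simp
  have hcm : c0 - m = -Real.pi + w + η := by rw [hme]; ring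
  have hA : -Real.pi ^ 2 * (1 - 1 / (n:ℝ)) = -Real.pi ^ 2 + Real.pi * w := by rw [hw]; ring
  have hK1 : {z : ℝ × ℝ | sqd 0 z ≤ b} ⊆ openDisk := by
    intro z hz
    have hz' : sqd 0 z ≤ b := hz
    show z.1 ^ 2 + z.2 ^ 2 < 1
    have : sqd 0 z = z.1 ^ 2 + z.2 ^ 2 := by simp [sqd]
    linarith
  refine ⟨l, φ, σ, hl, ⟨_, sqd_compact 0 b, hK1, ?_⟩, ⟨_, sqd_compact 0 b, hK1, ?_⟩, hσ,
    ?_, ?_, ?_, ?_, ?_⟩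
  · intro z hz
    exact hlK z (hab.trans (not_le.1 hz))
  · intro z hz
    exact hφK z (not_le.1 hz).le
  · intro z
    have := hbd z
    constructor <;> linarith
  · intro z hz
    rcases hcases z with ⟨p, hp, hz'⟩ | hz'
    · have := hper 1 p hp z hz' (by simpa using hz)
      have := Nat.le_of_dvd one_pos this
      omega
    · rw [(hout z hz').2.1]; exact (hS0 _).1
  · rw [hA]
    constructor
    · refine lt_of_lt_of_le ?_ hlow
      rw [hcm]; nlinarith [mul_pos hη0 hpi]
    · refine lt_of_le_of_lt hup ?_
      rw [hcm]
      have k1 := mul_le_mul_of_nonneg_left hCge (show 0 ≤ Real.pi - η by linarith)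
      have k2 := mul_pos hη0 (sub_pos.2 hpi4)
      have k3 := mul_pos hη0 hη0
      generalize volume.real C = V at k1 ⊢
      have k4 : w * Real.pi + (-Real.pi + w + η - w) * V = w * Real.pi - (Real.pi - η) * V := by
        ring
      have k5 : (Real.pi - η) * (Real.pi - η) =
        Real.pi ^ 2 + 2 * (η * (3.15 - Real.pi)) - 6.3 * η + η * η := by ring
      rw [k4]
      linarith [mul_comm w Real.pi]
  · intro z
    rcases hcases z with ⟨p, hp, hz⟩ | hz
    · obtain ⟨h1, h2⟩ := hin p hp z hz
      have h3 := (hin _ (hP' p hp) (φ.toFun z) (by simp only; rw [h1]; exact hz)).2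
      rw [h3, h2]
      simp only [h1]
    · obtain ⟨o1, o2, o3⟩ := hout z hz
      rw [(hout _ o3).2.1, o2, o1, sqd_tw]
  · intro k hk z hz hne
    rcases hcases z with ⟨p, hp, hz'⟩ | hz'
    · exact Nat.le_of_dvd hk (hper k p hp z hz' hz)
    · obtain ⟨-, -, h3⟩ := hiter2 k z hz'
      have ho := (hout z hz').1
      have hg0 : G0 n a b (sqd 0 z) ≠ 0 := by
        intro h
        exact hne (by rw [ho, tw_eq_self _ _ _ h])
      have hcz : cc z ≠ 0 := by
        intro h
        apply hne
        apply cc_inj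
        rw [ho, cc_tw, h]; simp
      rw [hz, ← Complex.exp_nat_mul] at h3
      have h4 : Complex.exp (k * (G0 n a b (sqd 0 z) * Complex.I)) = 1 :=
        mul_right_cancel₀ hcz (by rw [one_mul]; exact h3.symm)
      rw [Complex.exp_eq_one_iff] at h4
      obtain ⟨j, hj⟩ := h4
      have h5 : (k:ℝ) * G0 n a b (sqd 0 z) = j * (2 * Real.pi) := by
        have := congrArg Complex.im hj
        have e1 : (k * (G0 n a b (sqd 0 z) * Complex.I) : ℂ) =
          ((k:ℝ) * G0 n a b (sqd 0 z) : ℝ) * Complex.I := by push_cast; ring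
        have e2 : (j * (2 * Real.pi * Complex.I) : ℂ) =
          (j * (2 * Real.pi) : ℝ) * Complex.I := by push_cast; ring
        rw [e1, e2, Complex.im_ofReal_mul, Complex.im_ofReal_mul] at this
        simpa using this
      have hgn : 0 ≤ G0 n a b (sqd 0 z) := by
        unfold G0; exact mul_nonneg (by positivity) (chi_nonneg _ _ _)
      have hgp : 0 < G0 n a b (sqd 0 z) := lt_of_le_of_ne hgn hg0.symm
      have hgl : G0 n a b (sqd 0 z) * n ≤ 2 * Real.pi := by
        have h1 := chi_le_one a b (sqd 0 z)
        have : G0 n a b (sqd 0 z) * n = 2 * Real.pi * chi a b (sqd 0 z) := by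
          unfold G0; field_simp
        rw [this]; exact mul_le_of_le_one_right (by positivity) h1
      have hk0 : (0:ℝ) < k := by exact_mod_cast hk
      have hj0 : (0:ℝ) < j := by
        have : 0 < (j:ℝ) * (2 * Real.pi) := by rw [← h5]; positivity
        exact pos_of_mul_pos_left this (by positivity)
      have hj1 : (1:ℝ) ≤ j := by
        have : (0:ℤ) < j := by exact_mod_cast hj0
        exact_mod_cast (show (1:ℤ) ≤ j by omega)
      have : (n:ℝ) ≤ k := by
        by_contra hc
        push Not at hc
        have h6 : (k:ℝ) * G0 n a b (sqd 0 z) < n * G0 n a b (sqd 0 z) :=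
          mul_lt_mul_of_pos_right hc hgp
        have h7 : 1 * (2 * Real.pi) ≤ j * (2 * Real.pi) :=
          mul_le_mul_of_nonneg_right hj1 (by positivity)
        have h8 := mul_comm (n:ℝ) (G0 n a b (sqd 0 z))
        linarith
      exact_mod_cast this
end
end
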